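/- Let n ≥ 1, let a ∈ (0,∞)ⁿ have pairwise distinct entries, and let s ∈ ℂⁿ have pairwise distinct entries with Re(s_j − s_{j+1}) ≥ 2 for all j = 1,…,n−1. Then f_n(s, D(1)) ≠ 0 and f_n(s, D(a)) / f_n(s, D(1)) = (∏_{j=0}^{n−1} 2^j · j!) · det[a_c^{s_b+n−1}]_{b,c=1,…,n} / (Δ_n(a²) · Δ_n(s_1,…,s_n)). -/

import Mathlib

open MeasureTheory Matrix
open scoped BigOperators

noncomputable section

instance matrixMeasurableSpace {l : Type*} [Fintype l] : MeasurableSpace (Matrix l l ℝ) :=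
  inferInstanceAs (MeasurableSpace (l → l → ℝ))

/-- The orthogonal group `O(m)` as a subtype of `m × m` real matrices. -/
abbrev OG (m : ℕ) := Matrix.orthogonalGroup (Fin m) ℝ

/-- `t ^ w` for a real `t ≥ 0` and complex `w`, with the convention `0 ^ w = 0`. -/
def cpw (t : ℝ) (w : ℂ) : ℂ := if t = 0 then 0 else Complex.exp (w * Real.log t)

/-- The `2n × 2n` real antisymmetric matrix `D(a) = diag(a₁ J, …, aₙ J)`,
`J = [[0,1],[-1,0]]`. -/
def Dmat {n : ℕ} (a : Fin n → ℝ) : Matrix (Fin (2 * n)) (Fin (2 * n)) ℝ :=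
  Matrix.of fun i j =>
    if i.val / 2 = j.val / 2 then
      a ⟨i.val / 2, by have := i.isLt; omega⟩ *
        (if i.val % 2 = 0 ∧ j.val % 2 = 1 then 1
          else if i.val % 2 = 1 ∧ j.val % 2 = 0 then -1 else 0)
    else 0

/-- Vandermonde product `Δ_m(x) = ∏_{j<k} (x_k - x_j)`. -/
def vdm {m : ℕ} {R : Type*} [CommRing R] (x : Fin m → R) : R :=
  ∏ p ∈ Finset.univ.filter (fun p : Fin m × Fin m => p.1 < p.2), (x p.2 - x p.1)

/-- `s_{n+1} := -n-1` convention: the `j`-th exponent `(s_j - s_{j+1})/2 - 1`. -/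
def expo (n : ℕ) (s : Fin n → ℂ) (j : Fin n) : ℂ :=
  (s j - (if h : j.val + 1 < n then s ⟨j.val + 1, h⟩ else -(n : ℂ) - 1)) / 2 - 1

/-- The spherical-type group integral
`f_n(s,X) = ∫_{O(2n)} ∏_j det((kXkᵀ)_{[2j]})^{(s_j-s_{j+1})/2-1} d*k`. -/
def sphInt (n : ℕ) (μ : Measure (OG (2 * n))) (s : Fin n → ℂ)
    (X : Matrix (Fin (2 * n)) (Fin (2 * n)) ℝ) : ℂ :=
  ∫ k : OG (2 * n), ∏ j : Fin n,
    cpw ((((k : Matrix (Fin (2 * n)) (Fin (2 * n)) ℝ) * X *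
        (k : Matrix (Fin (2 * n)) (Fin (2 * n)) ℝ)ᵀ).submatrix
          (Fin.castLE (by have := j.isLt; omega : 2 * (j.val + 1) ≤ 2 * n))
          (Fin.castLE (by have := j.isLt; omega : 2 * (j.val + 1) ≤ 2 * n))).det)
      (expo n s j) ∂μ

section
open scoped ENNReal


instance borelMat (m : ℕ) : BorelSpace (Matrix (Fin m) (Fin m) ℝ) :=
  inferInstanceAs (BorelSpace (Fin m → Fin m → ℝ))
instance sccMat (m : ℕ) : SecondCountableTopology (Matrix (Fin m) (Fin m) ℝ) :=
  inferInstanceAs (SecondCountableTopology (Fin m → Fin m → ℝ))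
instance sccOG (m : ℕ) : SecondCountableTopology (OG m) :=
  TopologicalSpace.Subtype.secondCountableTopology _

lemma OG_mul_t {m : ℕ} (k : OG m) : (k : Matrix (Fin m) (Fin m) ℝ) * (k : Matrix (Fin m) (Fin m) ℝ)ᵀ = 1 :=
  (Matrix.mem_orthogonalGroup_iff _ _).1 k.2
lemma OG_t_mul {m : ℕ} (k : OG m) : (k : Matrix (Fin m) (Fin m) ℝ)ᵀ * (k : Matrix (Fin m) (Fin m) ℝ) = 1 :=
  (Matrix.mem_orthogonalGroup_iff' _ _).1 k.2

instance compOG (m : ℕ) : CompactSpace (OG m) := by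
  refine (isCompact_iff_compactSpace (s := ((OG m : Submonoid (Matrix (Fin m) (Fin m) ℝ)) : Set (Matrix (Fin m) (Fin m) ℝ)))).1 ?_
  have hb : IsCompact (Set.pi Set.univ (fun _ : Fin m => Set.pi Set.univ (fun _ : Fin m => Set.Icc (-1:ℝ) 1))) :=
    isCompact_univ_pi fun _ => isCompact_univ_pi fun _ => isCompact_Icc
  refine IsCompact.of_isClosed_subset hb ?_ ?_
  · have : ((OG m : Set (Matrix (Fin m) (Fin m) ℝ))) = {A | A * Aᵀ = 1} := by
      ext A; exact Matrix.mem_orthogonalGroup_iff _ _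
    rw [this]
    exact isClosed_eq (by fun_prop) continuous_const
  · intro A hA i _ j _
    have h := congrFun (congrFun ((Matrix.mem_orthogonalGroup_iff _ _).1 hA) i) i
    rw [Matrix.mul_apply] at h
    simp only [Matrix.transpose_apply, Matrix.one_apply_eq] at h
    have h2 : A i j * A i j ≤ 1 := by
      rw [← h]
      exact Finset.single_le_sum (f := fun j => A i j * A i j) (fun j _ => mul_self_nonneg _) (Finset.mem_univ j)
    constructor <;> nlinarith

lemma exists_haar (m : ℕ) : ∃ ν : Measure (OG m), ν.IsMulLeftInvariant ∧ IsProbabilityMeasure ν := by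
  refine ⟨Measure.haarMeasure ⊤, inferInstance, ⟨?_⟩⟩
  have := Measure.haarMeasure_self (G := OG m) (K₀ := ⊤)
  simpa using this

lemma cpw_eq {w : ℂ} (hw : w ≠ 0) (t : ℝ) : cpw t w = ((|t| : ℝ) : ℂ) ^ w := by
  unfold cpw
  split_ifs with h
  · simp [h, hw]
  · rw [Complex.cpow_def_of_ne_zero (by simpa using h), ← Complex.ofReal_log (abs_nonneg t), Real.log_abs, mul_comm]

lemma continuous_cpw {w : ℂ} (hw : 0 < w.re) : Continuous (fun t => cpw t w) := by
  have h0 : w ≠ 0 := by rintro rfl; simp at hw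
  simp_rw [cpw_eq h0]
  exact (Complex.continuous_ofReal_cpow_const hw).comp continuous_abs

def ig (m J : ℕ) (hJ : 2 * J ≤ m) (e : ℕ → ℂ) (A : Matrix (Fin m) (Fin m) ℝ) : ℂ :=
  ∏ j : Fin J, cpw ((A.submatrix
          (Fin.castLE (by have := j.isLt; omega : 2 * (j.val + 1) ≤ m))
          (Fin.castLE (by have := j.isLt; omega : 2 * (j.val + 1) ≤ m))).det) (e j)

def FI (m J : ℕ) (hJ : 2 * J ≤ m) (e : ℕ → ℂ) (μ : Measure (OG m)) (X : Matrix (Fin m) (Fin m) ℝ) : ℂ :=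
  ∫ k : OG m, ig m J hJ e ((k : Matrix (Fin m) (Fin m) ℝ) * X * (k : Matrix (Fin m) (Fin m) ℝ)ᵀ) ∂μ

lemma continuous_ig {m J : ℕ} (hJ : 2 * J ≤ m) {e : ℕ → ℂ} (he : ∀ j < J, 0 < (e j).re) :
    Continuous (ig m J hJ e) := by
  unfold ig
  refine continuous_finsetProd _ fun j _ => (continuous_cpw (he j j.2)).comp ?_
  fun_prop

def trunc {m : ℕ} (A : Matrix (Fin (m+1)) (Fin (m+1)) ℝ) : Matrix (Fin m) (Fin m) ℝ :=
  A.submatrix Fin.castSucc Fin.castSucc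

lemma ig_trunc {m J : ℕ} (hJ : 2 * J ≤ m) (e : ℕ → ℂ) (A : Matrix (Fin (m+1)) (Fin (m+1)) ℝ) :
    ig (m+1) J (by omega) e A = ig m J hJ e (trunc A) := rfl

def emb {m : ℕ} (h : Matrix (Fin m) (Fin m) ℝ) : Matrix (Fin (m+1)) (Fin (m+1)) ℝ :=
  (Matrix.fromBlocks h 0 0 (1 : Matrix (Fin 1) (Fin 1) ℝ)).submatrix finSumFinEquiv.symm finSumFinEquiv.symm

lemma emb_mul_t {m : ℕ} (h : OG m) : emb (h : Matrix (Fin m) (Fin m) ℝ) ∈ Matrix.orthogonalGroup (Fin (m+1)) ℝ := by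
  rw [Matrix.mem_orthogonalGroup_iff]
  unfold emb
  rw [Matrix.transpose_submatrix, Matrix.submatrix_mul_equiv, Matrix.fromBlocks_transpose, Matrix.fromBlocks_multiply]
  simp [OG_mul_t]

lemma trunc_emb {m : ℕ} (h : Matrix (Fin m) (Fin m) ℝ) (A : Matrix (Fin (m+1)) (Fin (m+1)) ℝ) :
    trunc (emb h * A * (emb h)ᵀ) = h * trunc A * hᵀ := by
  have hA : A = (Matrix.fromBlocks (trunc A) (A.submatrix finSumFinEquiv finSumFinEquiv).toBlocks₁₂
    (A.submatrix finSumFinEquiv finSumFinEquiv).toBlocks₂₁ (A.submatrix finSumFinEquiv finSumFinEquiv).toBlocks₂₂).submatrix finSumFinEquiv.symm finSumFinEquiv.symm := by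
    have : trunc A = (A.submatrix finSumFinEquiv finSumFinEquiv).toBlocks₁₁ := by
      ext i j; rfl
    rw [this, Matrix.fromBlocks_toBlocks]
    ext i j; simp
  conv_lhs => rw [hA]
  unfold emb
  rw [Matrix.transpose_submatrix, Matrix.submatrix_mul_equiv, Matrix.submatrix_mul_equiv, Matrix.fromBlocks_transpose, Matrix.fromBlocks_multiply, Matrix.fromBlocks_multiply]
  ext i j
  have hc : ∀ i : Fin m, (finSumFinEquiv (m := m) (n := 1)).symm (Fin.castSucc i) = Sum.inl i := by
    intro i; exact finSumFinEquiv_symm_apply_castAdd i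
  simp [trunc, hc]

def embO {m : ℕ} (h : OG m) : OG (m+1) := ⟨emb h, emb_mul_t h⟩

lemma continuous_embO {m : ℕ} : Continuous (embO (m := m)) := by
  refine Continuous.subtype_mk ?_ _
  unfold emb
  fun_prop

lemma FI_rec {m J : ℕ} (hJ : 2 * J ≤ m) {e : ℕ → ℂ} (he : ∀ j < J, 0 < (e j).re)
    (μ : Measure (OG (m+1))) [μ.IsMulLeftInvariant] [IsProbabilityMeasure μ]
    (ν : Measure (OG m)) [IsProbabilityMeasure ν] (X : Matrix (Fin (m+1)) (Fin (m+1)) ℝ) :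
    FI (m+1) J (by omega) e μ X =
      ∫ k : OG (m+1), FI m J hJ e ν (trunc ((k : Matrix (Fin (m+1)) (Fin (m+1)) ℝ) * X * (k : Matrix (Fin (m+1)) (Fin (m+1)) ℝ)ᵀ)) ∂μ := by
  set φ : OG (m+1) → ℂ := fun k => ig (m+1) J (by omega) e ((k : Matrix (Fin (m+1)) (Fin (m+1)) ℝ) * X * (k : Matrix (Fin (m+1)) (Fin (m+1)) ℝ)ᵀ) with hφ
  have hc : Continuous φ := (continuous_ig _ he).comp (by fun_prop)
  have hc2 : Continuous (fun p : OG m × OG (m+1) => φ (embO p.1 * p.2)) :=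
    hc.comp ((continuous_embO.comp continuous_fst).mul continuous_snd)
  have hint : Integrable (fun p : OG m × OG (m+1) => φ (embO p.1 * p.2)) (ν.prod μ) := by
    exact hc2.integrable_of_hasCompactSupport (HasCompactSupport.of_compactSpace _)
  calc FI (m+1) J (by omega) e μ X = ∫ h : OG m, (∫ k, φ k ∂μ) ∂ν := by simp [FI, hφ]
    _ = ∫ h : OG m, (∫ k, φ (embO h * k) ∂μ) ∂ν := by
        congr 1; ext h
        rw [integral_mul_left_eq_self]
    _ = ∫ k, (∫ h : OG m, φ (embO h * k) ∂ν) ∂μ := integral_integral_swap hint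
    _ = _ := by
        congr 1; ext k
        unfold FI
        congr 1; ext h
        simp only [hφ]
        rw [ig_trunc hJ, ← trunc_emb]
        congr 2
        simp [embO, Matrix.mul_assoc, Matrix.transpose_mul]

end

section
open scoped ENNReal


def gam (m : ℕ) : Measure (Fin m → ℝ) := Measure.pi (fun _ => ProbabilityTheory.gaussianReal 0 1)

instance gam_prob (m : ℕ) : IsProbabilityMeasure (gam m) := by unfold gam; infer_instance

lemma dot_orth {m : ℕ} {A : Matrix (Fin m) (Fin m) ℝ} (hA : Aᵀ * A = 1) (x : Fin m → ℝ) :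
    (A *ᵥ x) ⬝ᵥ (A *ᵥ x) = x ⬝ᵥ x := by
  rw [Matrix.dotProduct_mulVec, Matrix.vecMul_mulVec, hA, Matrix.vecMul_one]

def isoOf {m : ℕ} (A : Matrix (Fin m) (Fin m) ℝ) (hA : Aᵀ * A = 1) :
    EuclideanSpace ℝ (Fin m) →ₗᵢ[ℝ] EuclideanSpace ℝ (Fin m) where
  toFun x := WithLp.toLp 2 (A *ᵥ x.ofLp)
  map_add' x y := by simp [Matrix.mulVec_add]
  map_smul' c x := by simp [Matrix.mulVec_smul]
  norm_map' x := by
    have h := dot_orth hA x.ofLp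
    simp only [dotProduct, ← pow_two] at h
    simp only [LinearMap.coe_mk, AddHom.coe_mk, EuclideanSpace.norm_eq, Real.norm_eq_abs, sq_abs]
    rw [h]

lemma gam_inv {m : ℕ} (A : Matrix (Fin m) (Fin m) ℝ) (hA : Aᵀ * A = 1) :
    (gam m).map (fun x => A *ᵥ x) = gam m := by
  have h1 : gam m = (ProbabilityTheory.stdGaussian (EuclideanSpace ℝ (Fin m))).map (WithLp.ofLp) := by
    rw [← ProbabilityTheory.map_pi_eq_stdGaussian, Measure.map_map (by fun_prop) (by fun_prop)]
    exact Measure.map_id.symm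
  have h2 := ProbabilityTheory.stdGaussian_map ((isoOf A hA).toLinearIsometryEquiv rfl)
  have hm : Measurable (fun x : Fin m → ℝ => A *ᵥ x) := by
    have : Continuous (fun x : Fin m → ℝ => A *ᵥ x) := by fun_prop
    exact this.measurable
  calc (gam m).map (fun x => A *ᵥ x) = (ProbabilityTheory.stdGaussian (EuclideanSpace ℝ (Fin m))).map (fun x => A *ᵥ x.ofLp) := by
        rw [h1, Measure.map_map hm (by fun_prop)]; rfl
    _ = ((ProbabilityTheory.stdGaussian (EuclideanSpace ℝ (Fin m))).map ((isoOf A hA).toLinearIsometryEquiv rfl)).map WithLp.ofLp := by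
        rw [Measure.map_map (by fun_prop) (by fun_prop)]; rfl
    _ = gam m := by rw [h2, h1]

lemma transitive_unit {m : ℕ} (e0 u : Fin m → ℝ) (he : e0 ⬝ᵥ e0 = 1) (hu : u ⬝ᵥ u = 1) :
    ∃ k : OG m, (k : Matrix (Fin m) (Fin m) ℝ) *ᵥ e0 = u := by
  by_cases h : e0 - u = 0
  · exact ⟨1, by simpa using sub_eq_zero.1 h⟩
  set v := e0 - u with hv
  have hvv : v ⬝ᵥ v ≠ 0 := fun h0 => h (dotProduct_self_eq_zero.1 h0)
  have hve : v ⬝ᵥ v = 2 * (v ⬝ᵥ e0) := by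
    simp only [hv, sub_dotProduct, dotProduct_sub, he, hu, dotProduct_comm u e0]; ring
  set K : Matrix (Fin m) (Fin m) ℝ := 1 - (2 / (v ⬝ᵥ v)) • vecMulVec v v with hK
  have hKt : Kᵀ = K := by simp [hK, transpose_vecMulVec]
  refine ⟨⟨K, (Matrix.mem_orthogonalGroup_iff _ _).2 ?_⟩, ?_⟩
  · rw [hKt, hK, Matrix.mul_sub, Matrix.sub_mul, Matrix.sub_mul]
    simp only [Matrix.mul_one, Matrix.one_mul, Matrix.smul_mul, Matrix.mul_smul, vecMulVec_mul_vecMulVec, smul_smul]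
    have : vecMulVec v ((v ⬝ᵥ v) • v) = (v ⬝ᵥ v) • vecMulVec v v := by
      ext i j; simp [vecMulVec_apply]; ring
    rw [this, smul_smul, show 2 / v ⬝ᵥ v * (2 / v ⬝ᵥ v) * (v ⬝ᵥ v) = 2 / v ⬝ᵥ v + 2 / v ⬝ᵥ v by field_simp; norm_num, add_smul]
    abel
  · show K *ᵥ e0 = u
    rw [hK, Matrix.sub_mulVec, Matrix.one_mulVec, Matrix.smul_mulVec]
    have : vecMulVec v v *ᵥ e0 = (v ⬝ᵥ e0) • v := by
      ext i; simp [vecMulVec_mulVec]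
      try ring
    rw [this, smul_smul, show 2 / v ⬝ᵥ v * (v ⬝ᵥ e0) = 1 by rw [hve] at hvv ⊢; have hq : v ⬝ᵥ e0 ≠ 0 := fun h => hvv (by rw [h, mul_zero]); field_simp, one_smul, hv]
    abel

lemma sph_map {m : ℕ} (e0 : Fin (m+1) → ℝ) (he : e0 ⬝ᵥ e0 = 1)
    (μ : Measure (OG (m+1))) [μ.IsMulLeftInvariant] [IsProbabilityMeasure μ]
    {Y : Type*} [MeasurableSpace Y] (ρ : (Fin (m+1) → ℝ) → Y) (hρ : Measurable ρ)
    (hs : ∀ c : ℝ, 0 < c → ∀ x, ρ (c • x) = ρ x) :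
    μ.map (fun k : OG (m+1) => ρ ((k : Matrix (Fin (m+1)) (Fin (m+1)) ℝ)ᵀ *ᵥ e0)) = (gam (m+1)).map ρ := by
  have hjc : Continuous (fun p : OG (m+1) × (Fin (m+1) → ℝ) => (p.1 : Matrix (Fin (m+1)) (Fin (m+1)) ℝ)ᵀ *ᵥ p.2) := by
    fun_prop
  have hkc : Measurable (fun k : OG (m+1) => ((k : Matrix (Fin (m+1)) (Fin (m+1)) ℝ)ᵀ *ᵥ e0)) := by
    have : Continuous (fun k : OG (m+1) => ((k : Matrix (Fin (m+1)) (Fin (m+1)) ℝ)ᵀ *ᵥ e0)) := by fun_prop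
    exact this.measurable
  have h0 : ∀ᵐ x ∂(gam (m+1)), x ≠ 0 := by
    have : gam (m+1) {0} = 0 := by
      rw [gam, Measure.pi_singleton]
      have := ProbabilityTheory.nullSingletonClass_gaussianReal (μ := 0) (v := 1) one_ne_zero
      simp
    rw [ae_iff]; simpa using this
  ext B hB
  have hρk : Measurable (fun k : OG (m+1) => ρ ((k : Matrix (Fin (m+1)) (Fin (m+1)) ℝ)ᵀ *ᵥ e0)) := hρ.comp hkc
  rw [Measure.map_apply hρk hB, Measure.map_apply hρ hB]
  set S := ρ ⁻¹' B with hS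
  have hSm : MeasurableSet S := hρ hB
  set E : Set (OG (m+1) × (Fin (m+1) → ℝ)) := (fun p => (p.1 : Matrix (Fin (m+1)) (Fin (m+1)) ℝ)ᵀ *ᵥ p.2) ⁻¹' S with hE
  have hEm : MeasurableSet E := hjc.measurable hSm
  have c1 : (μ.prod (gam (m+1))) E = gam (m+1) S := by
    rw [Measure.prod_apply hEm]
    have : ∀ k : OG (m+1), gam (m+1) (Prod.mk k ⁻¹' E) = gam (m+1) S := by
      intro k
      have := gam_inv (k : Matrix (Fin (m+1)) (Fin (m+1)) ℝ)ᵀ (by rw [transpose_transpose]; exact OG_mul_t k)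
      conv_rhs => rw [← this]
      rw [Measure.map_apply _ hSm]
      · rfl
      · have : Continuous (fun x : Fin (m+1) → ℝ => (k : Matrix (Fin (m+1)) (Fin (m+1)) ℝ)ᵀ *ᵥ x) := by fun_prop
        exact this.measurable
    simp [this]
  have c2 : (μ.prod (gam (m+1))) E = μ ((fun k : OG (m+1) => ρ ((k : Matrix (Fin (m+1)) (Fin (m+1)) ℝ)ᵀ *ᵥ e0)) ⁻¹' B) := by
    rw [Measure.prod_apply_symm hEm]
    have : ∀ᵐ x ∂(gam (m+1)), μ ((fun k => (k, x)) ⁻¹' E) = μ ((fun k : OG (m+1) => ρ ((k : Matrix (Fin (m+1)) (Fin (m+1)) ℝ)ᵀ *ᵥ e0)) ⁻¹' B) := by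
      filter_upwards [h0] with x hx
      have hxx : 0 < x ⬝ᵥ x := lt_of_le_of_ne (Finset.sum_nonneg fun i _ => mul_self_nonneg (x i)) fun h => hx (dotProduct_self_eq_zero.1 h.symm)
      set r := Real.sqrt (x ⬝ᵥ x) with hr
      have hr0 : 0 < r := Real.sqrt_pos.2 hxx
      have hr2 : r * r = x ⬝ᵥ x := Real.mul_self_sqrt hxx.le
      obtain ⟨k', hk'⟩ := transitive_unit e0 (r⁻¹ • x) he (by
        rw [smul_dotProduct, dotProduct_smul, ← hr2]; simp only [smul_eq_mul]; field_simp)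
      have hx' : x = r • ((k' : Matrix (Fin (m+1)) (Fin (m+1)) ℝ) *ᵥ e0) := by
        rw [hk', smul_smul, mul_inv_cancel₀ hr0.ne', one_smul]
      have hset : ((fun k => (k, x)) ⁻¹' E) = (fun k => k'⁻¹ * k) ⁻¹' ((fun k : OG (m+1) => ρ ((k : Matrix (Fin (m+1)) (Fin (m+1)) ℝ)ᵀ *ᵥ e0)) ⁻¹' B) := by
        ext k
        simp only [hE, hS, Set.mem_preimage]
        have : ((k : Matrix (Fin (m+1)) (Fin (m+1)) ℝ)ᵀ *ᵥ x) = r • (((k'⁻¹ * k : OG (m+1)) : Matrix (Fin (m+1)) (Fin (m+1)) ℝ)ᵀ *ᵥ e0) := by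
          have hinv : ((k'⁻¹ : OG (m+1)) : Matrix (Fin (m+1)) (Fin (m+1)) ℝ) = (k' : Matrix (Fin (m+1)) (Fin (m+1)) ℝ)ᵀ := rfl
          conv_lhs => rw [hx']
          rw [Matrix.mulVec_smul, Matrix.mulVec_mulVec, Submonoid.coe_mul, hinv, Matrix.transpose_mul, transpose_transpose]
        rw [this, hs r hr0]
      rw [hset, measure_preimage_mul]
    rw [lintegral_congr_ae this]; simp
  rw [← c2, c1]

end

section
open scoped ENNReal


lemma sq_image_Ioi : (fun r : ℝ => r ^ 2) '' Set.Ioi 0 = Set.Ioi 0 := by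
  ext t
  constructor
  · rintro ⟨r, hr, rfl⟩; have hr : 0 < r := hr; exact pow_pos hr 2
  · intro ht; exact ⟨Real.sqrt t, Real.sqrt_pos.2 ht, Real.sq_sqrt (le_of_lt ht)⟩

lemma lint_sq (F : ℝ → ℝ≥0∞) :
    ∫⁻ t in Set.Ioi (0:ℝ), F t = ∫⁻ r in Set.Ioi (0:ℝ), ENNReal.ofReal (2 * r) * F (r ^ 2) := by
  conv_lhs => rw [← sq_image_Ioi]
  rw [lintegral_image_eq_lintegral_abs_deriv_mul (f' := fun r => 2 * r) measurableSet_Ioi]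
  · refine setLIntegral_congr_fun measurableSet_Ioi fun r hr => ?_
    have : 0 < r := hr
    rw [abs_of_pos (by positivity)]
  · intro x _
    have := (hasDerivAt_pow 2 x).hasDerivWithinAt (s := Set.Ioi 0)
    simpa using this
  · intro x hx y hy h
    exact (pow_left_inj₀ (le_of_lt hx) (le_of_lt hy) two_ne_zero).1 h

lemma gammaMeasure_apply' (a : ℝ) {B : Set ℝ} (hB : MeasurableSet B) :
    ProbabilityTheory.gammaMeasure a (1/2) B = ∫⁻ t in Set.Ioi (0:ℝ), B.indicator (fun _ => 1) t *
      ENNReal.ofReal ((1/2) ^ a / Real.Gamma a * t ^ (a-1) * Real.exp (-(1/2 * t))) := by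
  rw [ProbabilityTheory.gammaMeasure, withDensity_apply _ hB, ← lintegral_indicator hB,
    ← lintegral_indicator measurableSet_Ioi]
  refine lintegral_congr_ae ?_
  have h0 : ∀ᵐ x : ℝ, x ≠ 0 := by simp [ae_iff]
  filter_upwards [h0] with t ht
  by_cases h : 0 < t
  · rw [Set.indicator_of_mem (show t ∈ Set.Ioi (0:ℝ) from h)]
    by_cases hb : t ∈ B
    · simp only [Set.indicator_of_mem hb, one_mul]
      rw [ProbabilityTheory.gammaPDF_of_nonneg h.le]
    · simp [Set.indicator_of_notMem hb]
  · rw [Set.indicator_of_notMem (show t ∉ Set.Ioi (0:ℝ) from h)]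
    have : t < 0 := lt_of_le_of_ne (not_lt.1 h) ht
    by_cases hb : t ∈ B
    · simp only [Set.indicator_of_mem hb]
      rw [ProbabilityTheory.gammaPDF_of_neg this]
    · simp [Set.indicator_of_notMem hb]

lemma law_one : (ProbabilityTheory.gaussianReal 0 1).map (fun x => x ^ 2) =
    ProbabilityTheory.gammaMeasure (1/2) (1/2) := by
  ext B hB
  rw [Measure.map_apply (by fun_prop) hB, gammaMeasure_apply' _ hB, lint_sq,
    ProbabilityTheory.gaussianReal_of_var_ne_zero _ one_ne_zero,
    withDensity_apply _ (measurableSet_preimage (by fun_prop) hB), ← lintegral_indicator (measurableSet_preimage (by fun_prop) hB)]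
  set G : ℝ → ℝ≥0∞ := ((fun x : ℝ => x ^ 2) ⁻¹' B).indicator (ProbabilityTheory.gaussianPDF 0 1) with hG
  have hGm : Measurable G := (ProbabilityTheory.measurable_gaussianPDF 0 1).indicator (measurableSet_preimage (by fun_prop) hB)
  have hGe : ∀ x, G (-x) = G x := by
    intro x
    simp only [hG, Set.indicator, Set.mem_preimage, ProbabilityTheory.gaussianPDF, ProbabilityTheory.gaussianPDFReal, neg_sq, sub_zero]
    have hi : (-x ∈ (fun x : ℝ => x ^ 2) ⁻¹' B) ↔ (x ∈ (fun x : ℝ => x ^ 2) ⁻¹' B) := by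
      rw [Set.mem_preimage, Set.mem_preimage]; simp only [neg_sq]
    classical
    split_ifs <;> tauto
  have h1 : ∫⁻ x, G x = (∫⁻ x in Set.Ioi 0, G x) + ∫⁻ x in Set.Iic 0, G x := by
    rw [← lintegral_add_compl G (measurableSet_Ioi (a := (0:ℝ)))]
    simp
  have h2 : ∫⁻ x in Set.Iic 0, G x = ∫⁻ x in Set.Ioi 0, G x := by
    have := (Measure.measurePreserving_neg (volume : Measure ℝ)).setLIntegral_comp_preimage (measurableSet_Iio (a := (0:ℝ))) hGm
    rw [setLIntegral_congr Iio_ae_eq_Iic.symm, ← this]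
    simp [hGe]
  rw [h1, h2, ← two_mul, ← lintegral_const_mul _ hGm]
  refine setLIntegral_congr_fun measurableSet_Ioi fun r hr => ?_
  have hr : 0 < r := hr
  simp only [hG]
  by_cases hb : r ^ 2 ∈ B
  · rw [Set.indicator_of_mem (show r ∈ ((fun x : ℝ => x ^ 2) ⁻¹' B) from hb), Set.indicator_of_mem hb, one_mul,
      ProbabilityTheory.gaussianPDF, ← ENNReal.ofReal_mul (by positivity), show (2:ℝ≥0∞) = ENNReal.ofReal 2 by simp, ← ENNReal.ofReal_mul (by norm_num)]
    congr 1
    rw [ProbabilityTheory.gaussianPDFReal, Real.Gamma_one_half_eq, ← Real.rpow_natCast r 2, ← Real.rpow_mul hr.le]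
    have e1 : r ^ (((2:ℕ):ℝ) * (1/2 - 1)) = r⁻¹ := by
      rw [← Real.rpow_neg_one]; norm_num
    rw [e1, ← Real.sqrt_eq_rpow]
    have e2 : Real.sqrt (2 * Real.pi * ((1 : NNReal):ℝ)) = Real.sqrt 2 * Real.sqrt Real.pi := by
      rw [NNReal.coe_one, mul_one, Real.sqrt_mul (by norm_num)]
    rw [e2]
    have e3 : Real.sqrt (1/2) = (Real.sqrt 2)⁻¹ := by rw [one_div, Real.sqrt_inv]
    rw [e3]
    have : Real.sqrt 2 ≠ 0 := by positivity
    have : Real.sqrt Real.pi ≠ 0 := by positivity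
    field_simp
    congr 1
    norm_num
  · rw [Set.indicator_of_notMem (show r ∉ ((fun x : ℝ => x ^ 2) ⁻¹' B) from hb), Set.indicator_of_notMem hb]; simp

lemma law_two : ((ProbabilityTheory.gaussianReal 0 1).prod (ProbabilityTheory.gaussianReal 0 1)).map (fun p : ℝ × ℝ => p.1 ^ 2 + p.2 ^ 2) =
    ProbabilityTheory.gammaMeasure 1 (1/2) := by
  ext B hB
  have hm : Measurable (fun p : ℝ × ℝ => p.1 ^ 2 + p.2 ^ 2) := by fun_prop
  rw [Measure.map_apply hm hB, gammaMeasure_apply' _ hB, lint_sq,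
    ProbabilityTheory.gaussianReal_of_var_ne_zero _ one_ne_zero, prod_withDensity (by fun_prop) (by fun_prop),
    withDensity_apply _ (hm hB), ← lintegral_indicator (hm hB), ← Measure.volume_eq_prod, ← lintegral_comp_polarCoord_symm]
  set Q : ℝ → ℝ≥0∞ := fun r => ENNReal.ofReal r * (B.indicator (fun _ => 1) (r ^ 2) * ENNReal.ofReal ((2 * Real.pi)⁻¹ * Real.exp (-(1/2 * r ^ 2)))) with hQ
  have hQm : Measurable Q := by
    refine (ENNReal.measurable_ofReal).mul (Measurable.mul ?_ (by fun_prop))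
    exact (measurable_const.indicator hB).comp (by fun_prop)
  have h1 : ∫⁻ p in polarCoord.target, ENNReal.ofReal p.1 • ((fun p : ℝ × ℝ => p.1 ^ 2 + p.2 ^ 2) ⁻¹' B).indicator
      (fun a => ProbabilityTheory.gaussianPDF 0 1 a.1 * ProbabilityTheory.gaussianPDF 0 1 a.2) (polarCoord.symm p) =
      ∫⁻ p in (Set.Ioi 0 ×ˢ Set.Ioo (-Real.pi) Real.pi : Set (ℝ × ℝ)), Q p.1 := by
    rw [polarCoord_target]
    refine setLIntegral_congr_fun (measurableSet_Ioi.prod measurableSet_Ioo) fun p hp => ?_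
    have hsq : (p.1 * Real.cos p.2) ^ 2 + (p.1 * Real.sin p.2) ^ 2 = p.1 ^ 2 := by
      rw [mul_pow, mul_pow, ← mul_add, Real.cos_sq_add_sin_sq, mul_one]
    simp only [hQ, smul_eq_mul, polarCoord_symm_apply]
    congr 1
    by_cases hb : p.1 ^ 2 ∈ B
    · rw [Set.indicator_of_mem (by rw [Set.mem_preimage]; simp only; rw [hsq]; exact hb), Set.indicator_of_mem hb, one_mul]
      simp only [ProbabilityTheory.gaussianPDF]
      rw [← ENNReal.ofReal_mul (ProbabilityTheory.gaussianPDFReal_nonneg _ _ _)]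
      congr 1
      simp only [ProbabilityTheory.gaussianPDFReal]
      rw [mul_mul_mul_comm, ← Real.exp_add, ← mul_inv, Real.mul_self_sqrt (by positivity), ← hsq]
      simp only [NNReal.coe_one]
      congr 2
      · ring
      · ring
    · rw [Set.indicator_of_notMem (by rw [Set.mem_preimage]; simp only; rw [hsq]; exact hb), Set.indicator_of_notMem hb]; simp
  rw [h1, Measure.volume_eq_prod, ← Measure.prod_restrict, lintegral_prod _ (by fun_prop)]
  simp only [lintegral_const]
  refine setLIntegral_congr_fun measurableSet_Ioi fun r hr => ?_
  have hr : 0 < r := hr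
  simp only [hQ, Measure.restrict_apply MeasurableSet.univ, Set.univ_inter, Real.volume_Ioo]
  by_cases hb : r ^ 2 ∈ B
  · rw [Set.indicator_of_mem hb, one_mul, one_mul, ← ENNReal.ofReal_mul hr.le, ← ENNReal.ofReal_mul (by positivity), ← ENNReal.ofReal_mul (by positivity)]
    congr 1
    have := Real.pi_pos.ne'
    simp
    field_simp
    ring
  · rw [Set.indicator_of_notMem hb]; simp

end

section
open scoped ENNReal


def tmap {m N : ℕ} (l : Fin m → Fin N) (x : Fin m → ℝ) (j : Fin N) : ℝ :=
  ∑ i with l i = j, x i ^ 2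

abbrev gR : Measure ℝ := ProbabilityTheory.gaussianReal 0 1

lemma sumsq_reindex {ι κ : Type} [Fintype ι] [Fintype κ] (e : κ ≃ ι) :
    (Measure.pi (fun _ : ι => gR)).map (fun x => ∑ i, x i ^ 2) =
      (Measure.pi (fun _ : κ => gR)).map (fun x => ∑ i, x i ^ 2) := by
  rw [← Measure.pi_map_piCongrLeft e (fun _ : ι => gR), Measure.map_map (by fun_prop) (by fun_prop)]
  congr 1
  ext x
  simp only [Function.comp]
  rw [← Equiv.sum_comp e]
  simp [MeasurableEquiv.coe_piCongrLeft, Equiv.piCongrLeft_apply_apply (P := fun _ : ι => ℝ)]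

lemma law_card {ι : Type} [Fintype ι] (h : Fintype.card ι = 1 ∨ Fintype.card ι = 2) :
    (Measure.pi (fun _ : ι => gR)).map (fun x => ∑ i, x i ^ 2) =
      ProbabilityTheory.gammaMeasure ((Fintype.card ι : ℝ) / 2) (1/2) := by
  rcases h with h | h
  · rw [h, sumsq_reindex (Fintype.equivFinOfCardEq h).symm, Nat.cast_one, ← law_one]
    have h2 := (measurePreserving_funUnique gR (Fin 1)).map_eq
    conv_rhs => rw [show ProbabilityTheory.gaussianReal 0 1 = gR from rfl, ← h2, Measure.map_map (by fun_prop) (by fun_prop)]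
    congr 1
    ext x; simp
  · rw [h, sumsq_reindex (Fintype.equivFinOfCardEq h).symm, Nat.cast_two, div_self two_ne_zero, ← law_two,
      ← (measurePreserving_finTwoArrow gR).map_eq, Measure.map_map (by fun_prop) (by fun_prop)]
    congr 1
    ext x; simp [Fin.sum_univ_two, MeasurableEquiv.finTwoArrow]

lemma law_tmap {m N : ℕ} (l : Fin m → Fin N) (κ : Fin N → ℕ) (hκ : ∀ j, Fintype.card {i // l i = j} = κ j)
    (hκ' : ∀ j, κ j = 1 ∨ κ j = 2) :
    (gam m).map (tmap l) = Measure.pi (fun j => ProbabilityTheory.gammaMeasure ((κ j : ℝ) / 2) (1/2)) := by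
  have hg : gam m = (Measure.pi (fun _ : (Σ j, {i // l i = j}) => gR)).map
      (MeasurableEquiv.piCongrLeft (fun _ => ℝ) (Equiv.sigmaFiberEquiv l)) :=
    (Measure.pi_map_piCongrLeft (Equiv.sigmaFiberEquiv l) (fun _ => gR)).symm
  have htm : Measurable (tmap l) := by unfold tmap; fun_prop
  have hc : (Measure.pi (fun _ : (Σ j, {i // l i = j}) => gR)).map (MeasurableEquiv.piCurry (fun j (_ : {i // l i = j}) => ℝ)) =
      Measure.pi (fun j => Measure.pi (fun _ : {i // l i = j} => gR)) := by
    have := Measure.infinitePi_map_piCurry (X := fun j (_ : {i // l i = j}) => ℝ) (fun _ _ => gR)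
    simpa only [Measure.infinitePi_eq_pi] using this
  have hcomp : tmap l ∘ (MeasurableEquiv.piCongrLeft (fun _ => ℝ) (Equiv.sigmaFiberEquiv l)) =
      (fun (y : ∀ j, {i // l i = j} → ℝ) j => ∑ i, y j i ^ 2) ∘ (MeasurableEquiv.piCurry (fun j (_ : {i // l i = j}) => ℝ)) := by
    ext x j
    simp only [Function.comp, tmap]
    rw [Finset.sum_subtype (p := fun i => l i = j) _ (by simp)]
    refine Finset.sum_congr rfl fun i _ => ?_
    congr 1
    have : (i : Fin m) = Equiv.sigmaFiberEquiv l ⟨j, i⟩ := rfl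
    rw [this, MeasurableEquiv.coe_piCongrLeft, Equiv.piCongrLeft_apply_apply (P := fun _ : Fin m => ℝ)]
    rfl
  have hmm : Measurable (fun (y : ∀ j, {i // l i = j} → ℝ) j => ∑ i, y j i ^ 2) := by fun_prop
  rw [hg, Measure.map_map htm (by fun_prop), hcomp, ← Measure.map_map hmm (by fun_prop), hc]
  have hq : ∀ j, Measurable (fun x : {i // l i = j} → ℝ => ∑ i, x i ^ 2) := fun j => by fun_prop
  have : ∀ j, SigmaFinite ((Measure.pi (fun _ : {i // l i = j} => gR)).map (fun x => ∑ i, x i ^ 2)) := by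
    intro j
    have := Measure.isProbabilityMeasure_map (μ := (Measure.pi (fun _ : {i // l i = j} => gR))) (f := fun x => ∑ i, x i ^ 2) (hq j).aemeasurable
    infer_instance
  have := Measure.pi_map_pi (μ := fun j => Measure.pi (fun _ : {i // l i = j} => gR)) (f := fun j x => ∑ i, x i ^ 2) (fun j => (hq j).aemeasurable)
  rw [this]
  congr 1
  ext1 j
  rw [law_card (by rw [hκ]; exact hκ' j), hκ]

lemma lint_prod_pi {N : ℕ} (g : Fin N → ℝ → ℝ≥0∞) (hg : ∀ j, Measurable (g j)) :
    ∫⁻ x, ∏ j, g j (x j) ∂(Measure.pi (fun _ : Fin N => (volume : Measure ℝ))) = ∏ j, ∫⁻ x, g j x := by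
  induction N with
  | zero => simp
  | succ n ih =>
    rw [← ((measurePreserving_piFinSuccAbove (fun _ : Fin (n+1) => (volume : Measure ℝ)) 0).symm).lintegral_comp_emb
      (MeasurableEquiv.measurableEmbedding _)]
    simp_rw [MeasurableEquiv.piFinSuccAbove_symm_apply, Fin.insertNthEquiv,
            Fin.prod_univ_succ, Fin.insertNth_zero, Equiv.coe_fn_mk, Fin.cons_succ, Fin.cons_zero]
    rw [← ih _ (fun j => hg j.succ)]
    exact lintegral_prod_mul (μ := (volume : Measure ℝ)) (ν := Measure.pi (fun _ : Fin n => (volume : Measure ℝ))) (f := g 0) (g := fun y : Fin n → ℝ => ∏ j, g j.succ (y j)) (hg 0).aemeasurable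
      (Finset.measurable_prod _ fun j _ => (hg j.succ).comp (measurable_pi_apply j)).aemeasurable

lemma pi_withDensity' {N : ℕ} (f : Fin N → ℝ → ℝ≥0∞) (hf : ∀ j, Measurable (f j))
    (h1 : ∀ j, IsProbabilityMeasure (volume.withDensity (f j))) :
    Measure.pi (fun j => (volume : Measure ℝ).withDensity (f j)) =
      (volume : Measure (Fin N → ℝ)).withDensity (fun x => ∏ j, f j (x j)) := by
  refine (Measure.pi_eq fun s hs => ?_)
  rw [withDensity_apply _ (MeasurableSet.univ_pi hs), ← lintegral_indicator (MeasurableSet.univ_pi hs)]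
  have : ∀ x : Fin N → ℝ, (Set.univ.pi s).indicator (fun x => ∏ j, f j (x j)) x = ∏ j, (s j).indicator (f j) (x j) := by
    intro x
    by_cases hx : x ∈ Set.univ.pi s
    · rw [Set.indicator_of_mem hx]
      exact Finset.prod_congr rfl fun j _ => (Set.indicator_of_mem (hx j trivial) _).symm
    · rw [Set.indicator_of_notMem hx]
      simp only [Set.mem_pi, Set.mem_univ, true_imp_iff, not_forall] at hx
      obtain ⟨j, hj⟩ := hx
      exact (Finset.prod_eq_zero (Finset.mem_univ j) (Set.indicator_of_notMem hj _)).symm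
  simp_rw [this]
  rw [volume_pi, lint_prod_pi _ (fun j => (hf j).indicator (hs j))]
  refine Finset.prod_congr rfl fun j _ => ?_
  rw [withDensity_apply _ (hs j), lintegral_indicator (hs j)]

end

section
open scoped ENNReal


def wt {d : ℕ} (α : Fin (d+1) → ℝ) (j : Fin (d+1)) : ℝ := ∏ i : Fin d, (α j - α (j.succAbove i))

def Tm {d : ℕ} (α z : Fin (d+1) → ℝ) (j : Fin (d+1)) : ℝ :=
  z 0 * ∏ i : Fin d, ((α j - z i.succ) / (α j - α (j.succAbove i)))

def Dm {d : ℕ} (α : Fin (d+1) → ℝ) : Set (Fin (d+1) → ℝ) :=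
  {z | 0 < z 0 ∧ ∀ i : Fin d, α i.castSucc < z i.succ ∧ z i.succ < α i.succ}

def Qp {d : ℕ} (α t : Fin (d+1) → ℝ) : Polynomial ℝ :=
  ∑ j, Polynomial.C (t j) * ∏ i : Fin d, (Polynomial.X - Polynomial.C (α (j.succAbove i)))

lemma Qp_eval {d : ℕ} (α t : Fin (d+1) → ℝ) (y : ℝ) :
    (Qp α t).eval y = ∑ j, t j * ∏ i : Fin d, (y - α (j.succAbove i)) := by
  simp [Qp, Polynomial.eval_finsetSum, Polynomial.eval_prod]

lemma Qp_eval_pole {d : ℕ} (α t : Fin (d+1) → ℝ) (j : Fin (d+1)) :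
    (Qp α t).eval (α j) = t j * wt α j := by
  rw [Qp_eval, Finset.sum_eq_single j]
  · rfl
  · intro b _ hb
    obtain ⟨i, hi⟩ := Fin.exists_succAbove_eq hb.symm
    rw [Finset.prod_eq_zero (Finset.mem_univ i) (by rw [hi]; simp), mul_zero]
  · simp

lemma prod_natDegree {d : ℕ} (c : Fin d → ℝ) :
    (∏ i : Fin d, (Polynomial.X - Polynomial.C (c i))).natDegree = d := by
  rw [Polynomial.natDegree_prod_of_monic _ _ (fun i _ => Polynomial.monic_X_sub_C _)]
  simp

lemma prod_coeff {d : ℕ} (c : Fin d → ℝ) :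
    (∏ i : Fin d, (Polynomial.X - Polynomial.C (c i))).coeff d = 1 := by
  have h := Polynomial.monic_prod_of_monic Finset.univ (fun i => Polynomial.X - Polynomial.C (c i)) (fun i _ => Polynomial.monic_X_sub_C _)
  have h2 := prod_natDegree c
  rw [Polynomial.Monic, Polynomial.leadingCoeff, h2] at h
  exact h

lemma prod_degree {d : ℕ} (c : Fin d → ℝ) (r : ℝ) :
    (Polynomial.C r * ∏ i : Fin d, (Polynomial.X - Polynomial.C (c i))).degree < (d + 1 : ℕ) := by
  rw [Polynomial.degree_lt_iff_coeff_zero]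
  intro m hm
  rw [Polynomial.coeff_C_mul, Polynomial.coeff_eq_zero_of_natDegree_lt, mul_zero]
  rw [prod_natDegree]; omega

lemma Qp_degree {d : ℕ} (α t : Fin (d+1) → ℝ) : (Qp α t).degree < (d+1 : ℕ) := by
  unfold Qp
  refine lt_of_le_of_lt (Polynomial.degree_sum_le _ _) ?_
  rw [Finset.sup_lt_iff (by exact WithBot.bot_lt_coe _)]
  intro j _
  exact prod_degree _ _

lemma Qp_coeff {d : ℕ} (α t : Fin (d+1) → ℝ) : (Qp α t).coeff d = ∑ j, t j := by
  unfold Qp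
  rw [Polynomial.finsetSum_coeff]
  refine Finset.sum_congr rfl fun j _ => ?_
  rw [Polynomial.coeff_C_mul, prod_coeff, mul_one]

lemma wt_ne {d : ℕ} {α : Fin (d+1) → ℝ} (hα : Function.Injective α) (j : Fin (d+1)) : wt α j ≠ 0 := by
  refine Finset.prod_ne_zero_iff.2 fun i _ => sub_ne_zero.2 fun h => ?_
  exact Fin.succAbove_ne j i (hα h).symm

lemma Tm_wt {d : ℕ} {α : Fin (d+1) → ℝ} (hα : Function.Injective α) (z : Fin (d+1) → ℝ) (j : Fin (d+1)) :
    Tm α z j * wt α j = z 0 * ∏ i : Fin d, (α j - z i.succ) := by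
  have h : Tm α z j = z 0 * ((∏ i : Fin d, (α j - z i.succ)) / wt α j) := by
    unfold Tm wt; rw [Finset.prod_div_distrib]
  rw [h]
  field_simp [wt_ne hα j]

lemma Qp_Tm {d : ℕ} {α : Fin (d+1) → ℝ} (hα : Function.Injective α) (z : Fin (d+1) → ℝ) :
    Qp α (Tm α z) = Polynomial.C (z 0) * ∏ i : Fin d, (Polynomial.X - Polynomial.C (z i.succ)) := by
  refine Polynomial.eq_of_degrees_lt_of_eval_index_eq (s := Finset.univ) (v := α) hα.injOn ?_ ?_ ?_
  · simpa using Qp_degree α _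
  · simpa using prod_degree (fun i : Fin d => z i.succ) (z 0)
  · intro j _
    rw [Qp_eval_pole, Tm_wt hα]
    simp [Polynomial.eval_prod]

lemma Tm_sum {d : ℕ} {α : Fin (d+1) → ℝ} (hα : Function.Injective α) (z : Fin (d+1) → ℝ) :
    ∑ j, Tm α z j = z 0 := by
  rw [← Qp_coeff α, Qp_Tm hα, Polynomial.coeff_C_mul, prod_coeff, mul_one]

lemma Tm_pos {d : ℕ} {α : Fin (d+1) → ℝ} (hα : StrictMono α) {z : Fin (d+1) → ℝ} (hz : z ∈ Dm α) (j : Fin (d+1)) :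
    0 < Tm α z j := by
  refine mul_pos hz.1 (Finset.prod_pos fun i _ => ?_)
  have h := hz.2 i
  rcases lt_or_ge i.castSucc j with hij | hij
  · rw [Fin.succAbove_of_castSucc_lt _ _ hij]
    have h2 : α i.succ ≤ α j := hα.monotone (Fin.castSucc_lt_iff_succ_le.1 hij)
    exact div_pos (by linarith) (by have := hα hij; linarith)
  · rw [Fin.succAbove_of_le_castSucc _ _ hij]
    have h2 : α j ≤ α i.castSucc := hα.monotone hij
    exact div_pos_of_neg_of_neg (by linarith) (by linarith)

lemma Tm_inj {d : ℕ} {α : Fin (d+1) → ℝ} (hα : StrictMono α) : Set.InjOn (Tm α) (Dm α) := by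
  intro z hz z' hz' h
  have h0 : z 0 = z' 0 := by rw [← Tm_sum hα.injective z, h, Tm_sum hα.injective]
  have hp : ∀ y, z 0 * ∏ i : Fin d, (y - z i.succ) = z' 0 * ∏ i : Fin d, (y - z' i.succ) := by
    intro y
    have := congrArg (Polynomial.eval y) ((Qp_Tm hα.injective z).symm.trans ((congrArg (Qp α) h).trans (Qp_Tm hα.injective z')))
    simpa [Polynomial.eval_prod] using this
  ext j
  refine Fin.cases h0 (fun i => ?_) j
  have := hp (z i.succ)
  rw [Finset.prod_eq_zero (Finset.mem_univ i) (sub_self _), mul_zero, eq_comm, mul_eq_zero] at this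
  have h1 := this.resolve_left hz'.1.ne'
  obtain ⟨k, _, hk⟩ := Finset.prod_eq_zero_iff.1 h1
  have hk' : z i.succ = z' k.succ := by linarith
  rw [hk']
  have a1 := hz.2 i
  have a2 := hz'.2 k
  rcases lt_trichotomy i k with hik | hik | hik
  · exfalso
    have : α i.succ ≤ α k.castSucc := hα.monotone (Fin.succ_le_castSucc_iff.2 hik)
    linarith
  · rw [hik]
  · exfalso
    have : α k.succ ≤ α i.castSucc := hα.monotone (Fin.succ_le_castSucc_iff.2 hik)
    linarith

lemma wt_sign {d : ℕ} {α : Fin (d+1) → ℝ} (hα : StrictMono α) (i : Fin d) :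
    wt α i.castSucc * wt α i.succ < 0 := by
  have e1 : wt α i.castSucc * wt α i.succ = ∏ k : Fin d, ((α i.castSucc - α (i.castSucc.succAbove k)) * (α i.succ - α (i.succ.succAbove k))) := by
    unfold wt; rw [Finset.prod_mul_distrib]
  rw [e1, ← Finset.mul_prod_erase _ _ (Finset.mem_univ i)]
  refine mul_neg_of_neg_of_pos ?_ (Finset.prod_pos fun k hk => ?_)
  · rw [Fin.succAbove_castSucc_self, Fin.succAbove_of_castSucc_lt _ _ (Fin.castSucc_lt_succ (i := i))]
    have := hα (Fin.castSucc_lt_succ (i := i))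
    nlinarith
  · rcases lt_or_gt_of_ne (Finset.ne_of_mem_erase hk) with h | h
    · rw [Fin.succAbove_of_castSucc_lt _ _ (by simpa using h), Fin.succAbove_of_castSucc_lt _ _ (by
        simp only [Fin.lt_def, Fin.val_castSucc, Fin.val_succ] at *; omega)]
      have a1 : α k.castSucc < α i.castSucc := hα (by simpa using h)
      have a2 := hα (Fin.castSucc_lt_succ (i := i))
      exact mul_pos (by linarith) (by linarith)
    · rw [Fin.succAbove_of_le_castSucc _ _ (by simpa using h.le), Fin.succAbove_of_le_castSucc _ _ (by
        simp only [Fin.lt_def, Fin.le_def, Fin.val_castSucc, Fin.val_succ] at *; omega)]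
      have a1 : α i.succ < α k.succ := hα (by simpa using h)
      have a2 := hα (Fin.castSucc_lt_succ (i := i))
      exact mul_pos_of_neg_of_neg (by linarith) (by linarith)

lemma Tm_surj {d : ℕ} {α : Fin (d+1) → ℝ} (hα : StrictMono α) {t : Fin (d+1) → ℝ} (ht : ∀ j, 0 < t j) :
    ∃ z ∈ Dm α, Tm α z = t := by
  have hroot : ∀ i : Fin d, ∃ c, α i.castSucc < c ∧ c < α i.succ ∧ (Qp α t).eval c = 0 := by
    intro i
    have hs := wt_sign hα i
    have hlt := hα (Fin.castSucc_lt_succ (i := i))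
    have hc : ContinuousOn (fun y => (Qp α t).eval y) (Set.Icc (α i.castSucc) (α i.succ)) := (Qp α t).continuous.continuousOn
    have e1 := Qp_eval_pole α t i.castSucc
    have e2 := Qp_eval_pole α t i.succ
    have p1 := ht i.castSucc
    have p2 := ht i.succ
    rcases lt_or_ge 0 (wt α i.castSucc) with h | h
    · have h' : wt α i.succ < 0 := by by_contra hh; nlinarith
      obtain ⟨c, hc1, hc2⟩ := intermediate_value_Ioo' hlt.le hc (show (0:ℝ) ∈ Set.Ioo _ _ from by
        rw [e1, e2]; exact ⟨by nlinarith, by positivity⟩)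
      exact ⟨c, hc1.1, hc1.2, hc2⟩
    · have h' : 0 < wt α i.succ := by by_contra hh; nlinarith
      have h2 : wt α i.castSucc < 0 := lt_of_le_of_ne h (wt_ne hα.injective _)
      obtain ⟨c, hc1, hc2⟩ := intermediate_value_Ioo hlt.le hc (show (0:ℝ) ∈ Set.Ioo _ _ from by
        rw [e1, e2]; exact ⟨by nlinarith, by positivity⟩)
      exact ⟨c, hc1.1, hc1.2, hc2⟩
  choose c hc1 hc2 hc3 using hroot
  have hcm : Function.Injective c := by
    intro i k hik
    by_contra hne
    rcases lt_or_gt_of_ne hne with h | h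
    · have : α i.succ ≤ α k.castSucc := hα.monotone (Fin.succ_le_castSucc_iff.2 h)
      have := hc2 i; have := hc1 k; linarith
    · have : α k.succ ≤ α i.castSucc := hα.monotone (Fin.succ_le_castSucc_iff.2 h)
      have := hc2 k; have := hc1 i; linarith
  have hQ : Qp α t = Polynomial.C (∑ j, t j) * ∏ i : Fin d, (Polynomial.X - Polynomial.C (c i)) := by
    rw [← sub_eq_zero]
    refine Polynomial.eq_zero_of_degree_lt_of_eval_index_eq_zero (s := Finset.univ) (v := c) hcm.injOn ?_ ?_
    · rw [Finset.card_univ, Fintype.card_fin, Polynomial.degree_lt_iff_coeff_zero]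
      intro m hm
      rcases eq_or_lt_of_le hm with h | h
      · rw [← h, Polynomial.coeff_sub, Qp_coeff, Polynomial.coeff_C_mul, prod_coeff]; ring
      · rw [Polynomial.coeff_sub, (Polynomial.degree_lt_iff_coeff_zero _ _).1 (Qp_degree α t) m h,
          (Polynomial.degree_lt_iff_coeff_zero _ _).1 (prod_degree c _) m h, sub_zero]
    · intro i _
      rw [Polynomial.eval_sub, hc3, Polynomial.eval_mul, Polynomial.eval_prod,
        Finset.prod_eq_zero (Finset.mem_univ i) (by simp)]
      simp
  refine ⟨Fin.cons (∑ j, t j) c, ⟨?_, fun i => ?_⟩, ?_⟩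
  · rw [Fin.cons_zero]; exact Finset.sum_pos (fun j _ => ht j) ⟨0, Finset.mem_univ _⟩
  · simpa using ⟨hc1 i, hc2 i⟩
  · ext j
    refine mul_right_cancel₀ (wt_ne hα.injective j) ?_
    rw [Tm_wt hα.injective, ← Qp_eval_pole, hQ, Polynomial.eval_mul, Polynomial.eval_C, Polynomial.eval_prod]
    simp

lemma Tm_image {d : ℕ} {α : Fin (d+1) → ℝ} (hα : StrictMono α) : Tm α '' Dm α = {t | ∀ j, 0 < t j} := by
  ext t
  constructor
  · rintro ⟨z, hz, rfl⟩; exact Tm_pos hα hz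
  · intro ht; exact Tm_surj hα ht

end

section
open scoped ENNReal


def VD {N : ℕ} (x : Fin N → ℝ) : ℝ := (vandermonde x).det

lemma VD_sq {N : ℕ} (c : Fin N → ℝ) : |∏ j, ∏ i ∈ Finset.univ.erase j, (c j - c i)| = |VD c| * |VD c| := by
  have h := Finset.prod_prod_Ioi_mul_eq_prod_prod_off_diag (fun j i : Fin N => |c i - c j|)
  have h2 : |∏ j, ∏ i ∈ Finset.univ.erase j, (c j - c i)| = ∏ i, ∏ j ∈ {i}ᶜ, |c i - c j| := by
    simp_rw [Finset.abs_prod]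
    refine Finset.prod_congr rfl fun j _ => Finset.prod_congr ?_ fun _ _ => rfl
    ext; simp
  rw [h2, ← h, VD, det_vandermonde, Finset.abs_prod, ← Finset.prod_mul_distrib]
  refine Finset.prod_congr rfl fun i _ => ?_
  rw [Finset.abs_prod, ← Finset.prod_mul_distrib]
  refine Finset.prod_congr rfl fun j _ => ?_
  rw [abs_sub_comm (c i)]

lemma wt_abs {d : ℕ} (α : Fin (d+1) → ℝ) : ∏ j, |wt α j| = |VD α| * |VD α| := by
  rw [← VD_sq, Finset.abs_prod]
  refine Finset.prod_congr rfl fun j _ => ?_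
  unfold wt
  congr 1
  have h : Finset.univ.erase j = Finset.univ.image j.succAbove := by
    rw [Fin.image_succAbove_univ]; ext; simp
  rw [h, Finset.prod_image (fun _ _ _ _ h => Fin.succAbove_right_injective h)]

def Pk {d : ℕ} (c : Fin d → ℝ) (k : Fin (d+1)) : Polynomial ℝ :=
  Fin.cases (∏ i, (Polynomial.X - Polynomial.C (c i))) (fun k' => ∏ i ∈ Finset.univ.erase k', (Polynomial.X - Polynomial.C (c i))) k

lemma Pk_deg {d : ℕ} (c : Fin d → ℝ) (k : Fin (d+1)) : (Pk c k).natDegree < d + 1 := by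
  refine Fin.cases ?_ (fun k' => ?_) k
  · simp only [Pk, Fin.cases_zero]; rw [prod_natDegree]; omega
  · simp only [Pk, Fin.cases_succ]
    rw [Polynomial.natDegree_prod_of_monic _ _ (fun i _ => Polynomial.monic_X_sub_C _)]
    simp

def PM {d : ℕ} (c : Fin d → ℝ) (x : Fin (d+1) → ℝ) : Matrix (Fin (d+1)) (Fin (d+1)) ℝ :=
  of fun j k => (Pk c k).eval (x j)

lemma PM_eq {d : ℕ} (c : Fin d → ℝ) (x : Fin (d+1) → ℝ) :
    PM c x = vandermonde x * (of fun i k : Fin (d+1) => (Pk c k).coeff i) := by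
  ext j k
  rw [PM, of_apply, Polynomial.eval_eq_sum_range' (Pk_deg c k), Matrix.mul_apply, ← Fin.sum_univ_eq_sum_range (fun i => (Pk c k).coeff i * x j ^ i)]
  refine Finset.sum_congr rfl fun i _ => ?_
  rw [vandermonde_apply, of_apply, mul_comm]

lemma PM_cons {d : ℕ} (c : Fin d → ℝ) (x0 : ℝ) :
    (PM c (Fin.cons x0 c)).det = (∏ i, (x0 - c i)) * ∏ j, ∏ i ∈ Finset.univ.erase j, (c j - c i) := by
  rw [det_succ_column_zero, Fin.sum_univ_succ]
  have h1 : ∀ j : Fin d, PM c (Fin.cons x0 c) j.succ 0 = 0 := by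
    intro j
    simp only [PM, of_apply, Fin.cons_succ, Pk, Fin.cases_zero, Polynomial.eval_prod]
    exact Finset.prod_eq_zero (Finset.mem_univ j) (by simp)
  have h2 : (PM c (Fin.cons x0 c)).submatrix (Fin.succAbove 0) Fin.succ = diagonal (fun j => ∏ i ∈ Finset.univ.erase j, (c j - c i)) := by
    ext j k
    simp only [PM, submatrix_apply, of_apply, Fin.zero_succAbove, Fin.cons_succ, Pk, Fin.cases_succ, Polynomial.eval_prod]
    rcases eq_or_ne j k with h | h
    · subst h; simp
    · rw [diagonal_apply_ne _ h]
      exact Finset.prod_eq_zero (i := j) (by simp [h]) (by simp)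
  simp only [h1, h2, det_diagonal]
  simp [PM, Pk, Polynomial.eval_prod]

lemma PM_det {d : ℕ} (c : Fin d → ℝ) (hc : Function.Injective c) (x : Fin (d+1) → ℝ) :
    |(PM c x).det| = |VD x| * |VD c| := by
  obtain ⟨x0, hx0⟩ : ∃ x0, ∀ i, x0 ≠ c i := by
    obtain ⟨x0, h⟩ := Infinite.exists_notMem_finset (Finset.univ.image c)
    exact ⟨x0, fun i hi => h (by simp [hi])⟩
  have h1 := PM_cons c x0
  rw [PM_eq, det_mul] at h1
  have h2 : (vandermonde (Fin.cons x0 c : Fin (d+1) → ℝ)).det = (∏ i, (c i - x0)) * VD c := by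
    rw [det_vandermonde, Fin.prod_univ_succ, VD, det_vandermonde]
    simp [Fin.prod_Ioi_succ]
  have hV : VD c ≠ 0 := by rw [VD]; exact det_vandermonde_ne_zero_iff.2 hc
  have hp : ∏ i, |c i - x0| ≠ 0 := Finset.prod_ne_zero_iff.2 fun i _ => abs_ne_zero.2 (sub_ne_zero.2 (hx0 i).symm)
  have h3 := congrArg abs h1
  rw [h2, abs_mul, abs_mul, abs_mul, VD_sq, Finset.abs_prod, Finset.abs_prod] at h3
  have h4 : ∏ i, |x0 - c i| = ∏ i, |c i - x0| := Finset.prod_congr rfl fun i _ => abs_sub_comm _ _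
  rw [h4] at h3
  rw [PM_eq, det_mul, abs_mul]
  have h5 : |VD c| ≠ 0 := abs_ne_zero.2 hV
  congr 1
  refine mul_left_cancel₀ (mul_ne_zero hp h5) ?_
  linarith

def Tjac {d : ℕ} (α z : Fin (d+1) → ℝ) : Matrix (Fin (d+1)) (Fin (d+1)) ℝ :=
  of fun j k => (wt α j)⁻¹ * ((PM (fun i => z i.succ) α j k) * Fin.cases 1 (fun _ => - z 0) k)

lemma Tjac_det {d : ℕ} {α : Fin (d+1) → ℝ} (hα : StrictMono α) (z : Fin (d+1) → ℝ) (hz : z ∈ Dm α) :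
    |(Tjac α z).det| = z 0 ^ d * |VD (fun i : Fin d => z i.succ)| / |VD α| := by
  have hc : StrictMono (fun i : Fin d => z i.succ) := by
    intro i k hik
    have : α i.succ ≤ α k.castSucc := hα.monotone (Fin.succ_le_castSucc_iff.2 hik)
    exact (hz.2 i).2.trans (lt_of_le_of_lt this (hz.2 k).1)
  have h : Tjac α z = diagonal (fun j => (wt α j)⁻¹) * (PM (fun i => z i.succ) α * diagonal (fun k => Fin.cases 1 (fun _ => - z 0) k)) := by
    ext j k
    rw [diagonal_mul, mul_diagonal]; rfl
  have hV : |VD α| ≠ 0 := by rw [VD]; exact abs_ne_zero.2 (det_vandermonde_ne_zero_iff.2 hα.injective)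
  rw [h, det_mul, det_mul, det_diagonal, det_diagonal, abs_mul, abs_mul, PM_det _ hc.injective, Finset.prod_inv_distrib, abs_inv,
    Finset.abs_prod, wt_abs, Fin.prod_univ_succ]
  simp only [Fin.cases_zero, Fin.cases_succ, one_mul, Finset.prod_const, Finset.card_univ, Fintype.card_fin, abs_pow, abs_neg, abs_of_pos hz.1]
  field_simp

lemma Tm_deriv {d : ℕ} {α : Fin (d+1) → ℝ} (z : Fin (d+1) → ℝ) :
    HasFDerivAt (Tm α) (LinearMap.toContinuousLinearMap (Matrix.toLin' (Tjac α z))) z := by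
  rw [hasFDerivAt_pi']
  intro j
  have h : (fun z => Tm α z j) = fun z => (wt α j)⁻¹ * (z 0 * ∏ i : Fin d, (α j - z i.succ)) := by
    ext z; unfold Tm wt; rw [Finset.prod_div_distrib]; ring
  rw [h]
  have h0 : ∀ k : Fin (d+1), HasFDerivAt (fun z : Fin (d+1) → ℝ => z k) (ContinuousLinearMap.proj k) z :=
    fun k => (ContinuousLinearMap.proj k : (Fin (d+1) → ℝ) →L[ℝ] ℝ).hasFDerivAt
  have h1 := HasFDerivAt.finsetProd (u := Finset.univ) (fun (i : Fin d) _ => (h0 i.succ).const_sub (α j))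
  have h2 := ((h0 0).mul h1).const_mul (wt α j)⁻¹
  refine h2.congr_fderiv ?_
  ext v
  simp only [ContinuousLinearMap.comp_apply, ContinuousLinearMap.proj_apply, LinearMap.coe_toContinuousLinearMap', toLin'_apply, mulVec, dotProduct, Tjac, of_apply, Fin.sum_univ_succ]
  simp [PM, Pk, Polynomial.eval_prod, Finset.mul_sum]
  rw [add_comm]
  congr 1
  · ring
  · congr 1
    exact Finset.sum_congr rfl fun i _ => by ring

end

section
open scoped ENNReal


def gpr (a x : ℝ) : ℝ := (1/2) ^ a / Real.Gamma a * x ^ (a-1) * Real.exp (-(1/2 * x))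

def gp (a x : ℝ) : ℝ≥0∞ := if 0 < x then ENNReal.ofReal (gpr a x) else 0

lemma gp_meas (a : ℝ) : Measurable (gp a) := by
  unfold gp gpr
  refine Measurable.ite measurableSet_Ioi ?_ measurable_const
  fun_prop

lemma gamma_gp (a : ℝ) : ProbabilityTheory.gammaMeasure a (1/2) = volume.withDensity (gp a) := by
  refine withDensity_congr_ae ?_
  have h0 : ∀ᵐ x : ℝ, x ≠ 0 := by simp [ae_iff]
  filter_upwards [h0] with x hx
  unfold ProbabilityTheory.gammaPDF ProbabilityTheory.gammaPDFReal gp gpr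
  rcases lt_or_gt_of_ne hx with h | h
  · rw [if_neg (not_le.2 h), if_neg (not_lt.2 h.le)]; simp
  · rw [if_pos h.le, if_pos h]

def kap (d κ0 : ℕ) (j : Fin (d+1)) : ℕ := if j = 0 then κ0 else 2

def PG (d κ0 : ℕ) : Measure (Fin (d+1) → ℝ) :=
  Measure.pi (fun j => ProbabilityTheory.gammaMeasure ((kap d κ0 j : ℝ)/2) (1/2))

lemma PG_dens (d κ0 : ℕ) (h0 : 0 < κ0) : PG d κ0 = volume.withDensity (fun x => ∏ j, gp ((kap d κ0 j : ℝ)/2) (x j)) := by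
  unfold PG
  simp_rw [gamma_gp]
  refine pi_withDensity' _ (fun j => gp_meas _) (fun j => ?_)
  rw [← gamma_gp]
  refine ProbabilityTheory.isProbabilityMeasure_gammaMeasure ?_ (by norm_num)
  have : 0 < kap d κ0 j := by unfold kap; split_ifs <;> omega
  positivity

lemma meas_pos {N : ℕ} : MeasurableSet {t : Fin N → ℝ | ∀ j, 0 < t j} := by
  have : {t : Fin N → ℝ | ∀ j, 0 < t j} = Set.univ.pi (fun _ => Set.Ioi 0) := by ext; simp
  rw [this]; exact MeasurableSet.univ_pi fun _ => measurableSet_Ioi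

lemma dens_zero {d κ0 : ℕ} {x : Fin (d+1) → ℝ} (hx : ¬ ∀ j, 0 < x j) : ∏ j, gp ((kap d κ0 j : ℝ)/2) (x j) = 0 := by
  push Not at hx
  obtain ⟨j, hj⟩ := hx
  exact Finset.prod_eq_zero (Finset.mem_univ j) (by unfold gp; rw [if_neg (not_lt.2 hj)])

lemma dens_meas (d κ0 : ℕ) : Measurable (fun x : Fin (d+1) → ℝ => ∏ j, gp ((kap d κ0 j : ℝ)/2) (x j)) :=
  Finset.measurable_prod _ fun j _ => (gp_meas _).comp (measurable_pi_apply j)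

lemma PG_pos (d κ0 : ℕ) (h0 : 0 < κ0) : ∀ᵐ t ∂(PG d κ0), ∀ j, 0 < t j := by
  rw [PG_dens d κ0 h0, ae_withDensity_iff (dens_meas d κ0)]
  filter_upwards with x hx
  by_contra h
  exact hx (dens_zero h)

lemma Dm_meas {d : ℕ} (α : Fin (d+1) → ℝ) : MeasurableSet (Dm α) := by
  have : Dm α = Set.univ.pi (Fin.cons (Set.Ioi (0:ℝ)) (fun i : Fin d => Set.Ioo (α i.castSucc) (α i.succ)) : Fin (d+1) → Set ℝ) := by
    ext z; simp [Dm, Fin.forall_fin_succ]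
  rw [this]
  refine MeasurableSet.univ_pi fun j => ?_
  refine Fin.cases ?_ (fun i => ?_) j
  · simp
  · simp

lemma PG_int (d κ0 : ℕ) (hk : 0 < κ0) {α : Fin (d+1) → ℝ} (hα : StrictMono α) (h : (Fin (d+1) → ℝ) → ℂ) :
    ∫ t, h t ∂(PG d κ0) = ∫ z in Dm α, (z 0 ^ d * |VD (fun i : Fin d => z i.succ)| / |VD α| *
      ∏ j, gpr ((kap d κ0 j : ℝ)/2) (Tm α z j)) • h (Tm α z) := by
  rw [PG_dens d κ0 hk, integral_withDensity_eq_integral_toReal_smul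
    (dens_meas d κ0)
    (Filter.Eventually.of_forall fun x => by
      refine ENNReal.prod_lt_top fun j _ => ?_
      unfold gp; split_ifs <;> simp)]
  rw [← setIntegral_eq_integral_of_forall_compl_eq_zero (s := {t | ∀ j, 0 < t j})
    (fun x hx => by rw [dens_zero hx]; simp), ← Tm_image hα,
    integral_image_eq_integral_abs_det_fderiv_smul volume (Dm_meas α) (fun z _ => (Tm_deriv z).hasFDerivWithinAt) (Tm_inj hα)]
  refine setIntegral_congr_fun (Dm_meas α) fun z hz => ?_
  have hdet : |(LinearMap.toContinuousLinearMap (Matrix.toLin' (Tjac α z))).det| = |(Tjac α z).det| := by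
    rw [ContinuousLinearMap.det, LinearMap.coe_toContinuousLinearMap, LinearMap.det_toLin']
  rw [hdet, Tjac_det hα z hz, smul_smul]
  congr 2
  rw [ENNReal.toReal_prod]
  refine Finset.prod_congr rfl fun j _ => ?_
  have hT := Tm_pos hα hz j
  unfold gp
  rw [if_pos hT, ENNReal.toReal_ofReal]
  unfold gpr
  have : 0 ≤ Real.Gamma ((kap d κ0 j : ℝ)/2) := Real.Gamma_nonneg_of_nonneg (by positivity)
  positivity

/-- scalar prefactor -/
def K0 (d κ0 : ℕ) : ℝ := (1/2) ^ ((κ0:ℝ)/2) / Real.Gamma ((κ0:ℝ)/2) * (1/2) ^ d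

lemma gpr_prod {d κ0 : ℕ} {α : Fin (d+1) → ℝ} (hα : StrictMono α) {z : Fin (d+1) → ℝ} (hz : z ∈ Dm α) :
    ∏ j, gpr ((kap d κ0 j : ℝ)/2) (Tm α z j) = K0 d κ0 * (z 0 ^ ((κ0:ℝ)/2 - 1) * Real.exp (-(1/2 * z 0))) *
      ((∏ i : Fin d, (α i.succ - α 0) ^ (1 - (κ0:ℝ)/2)) * ∏ i : Fin d, (z i.succ - α 0) ^ ((κ0:ℝ)/2 - 1)) := by
  have hs := Tm_sum hα.injective z
  have e1 : ∏ j, gpr ((kap d κ0 j : ℝ)/2) (Tm α z j) =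
      ((1/2) ^ ((κ0:ℝ)/2) / Real.Gamma ((κ0:ℝ)/2) * (Tm α z 0) ^ ((κ0:ℝ)/2 - 1)) * (1/2)^d * Real.exp (-(1/2 * z 0)) := by
    rw [← hs, Finset.mul_sum, ← Finset.sum_neg_distrib, Real.exp_sum, Fin.prod_univ_succ, Fin.prod_univ_succ]
    have : ∀ i : Fin d, gpr ((kap d κ0 i.succ : ℝ)/2) (Tm α z i.succ) = (1/2) * Real.exp (-(1/2 * Tm α z i.succ)) := by
      intro i
      simp [gpr, kap]
    simp_rw [this, Finset.prod_mul_distrib]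
    simp only [gpr, kap, if_true, Finset.prod_const, Finset.card_univ, Fintype.card_fin]
    ring
  have hp : ∀ i : Fin d, 0 < z i.succ - α 0 := fun i => by
    have := (hz.2 i).1
    have h2 : α 0 ≤ α i.castSucc := hα.monotone (Fin.zero_le _)
    linarith
  have hp2 : ∀ i : Fin d, 0 < α i.succ - α 0 := fun i => sub_pos.2 (hα (Fin.succ_pos i))
  have e2 : (Tm α z 0) ^ ((κ0:ℝ)/2 - 1) = z 0 ^ ((κ0:ℝ)/2 - 1) * ∏ i : Fin d, ((z i.succ - α 0) ^ ((κ0:ℝ)/2 - 1) * (α i.succ - α 0) ^ (1 - (κ0:ℝ)/2)) := by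
    unfold Tm
    have hh : ∀ i : Fin d, (α 0 - z i.succ) / (α 0 - α ((0 : Fin (d+1)).succAbove i)) = (z i.succ - α 0) / (α i.succ - α 0) := by
      intro i
      rw [Fin.zero_succAbove, ← neg_sub (z i.succ), ← neg_sub (α i.succ), neg_div_neg_eq]
    simp_rw [hh]
    rw [Real.mul_rpow hz.1.le (Finset.prod_nonneg fun i _ => (div_pos (hp i) (hp2 i)).le), ← Real.finsetProd_rpow _ _ (fun i _ => (div_pos (hp i) (hp2 i)).le)]
    congr 1
    refine Finset.prod_congr rfl fun i _ => ?_
    rw [Real.div_rpow (hp i).le (hp2 i).le, div_eq_mul_inv, ← Real.rpow_neg (hp2 i).le, neg_sub]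
  rw [e1, e2, Finset.prod_mul_distrib]
  unfold K0
  ring

end

section
open scoped ENNReal


lemma tmap_meas {m N : ℕ} (l : Fin m → Fin N) : Measurable (tmap l) := by unfold tmap; fun_prop

lemma sphT {m d κ0 : ℕ} (hκ0 : κ0 = 1 ∨ κ0 = 2) (l : Fin (m+1) → Fin (d+1))
    (hl : ∀ j, Fintype.card {i // l i = j} = kap d κ0 j)
    (A : Matrix (Fin (m+1)) (Fin (m+1)) ℝ) (hA : Aᵀ * A = 1)
    (e0 : Fin (m+1) → ℝ) (he : e0 ⬝ᵥ e0 = 1)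
    (μ : Measure (OG (m+1))) [μ.IsMulLeftInvariant] [IsProbabilityMeasure μ]
    {Y : Type*} [MeasurableSpace Y] (ρ : (Fin (d+1) → ℝ) → Y) (hρ : Measurable ρ)
    (hs : ∀ c : ℝ, 0 < c → ∀ x, ρ (c • x) = ρ x) :
    μ.map (fun k : OG (m+1) => ρ (tmap l (A *ᵥ ((k : Matrix (Fin (m+1)) (Fin (m+1)) ℝ)ᵀ *ᵥ e0)))) = (PG d κ0).map ρ := by
  have hA' : Measurable (fun x : Fin (m+1) → ℝ => A *ᵥ x) := by
    have : Continuous (fun x : Fin (m+1) → ℝ => A *ᵥ x) := by fun_prop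
    exact this.measurable
  have h1 := sph_map e0 he μ (fun x => ρ (tmap l (A *ᵥ x))) (hρ.comp ((tmap_meas l).comp hA')) (by
    intro c hc x
    have : tmap l (A *ᵥ (c • x)) = (c^2) • tmap l (A *ᵥ x) := by
      ext j; simp [tmap, mulVec_smul, Finset.mul_sum, mul_pow]
    simp only [this]
    exact hs _ (by positivity) _)
  have h2 := law_tmap l (kap d κ0) hl (fun j => by unfold kap; split_ifs; exacts [hκ0, Or.inr rfl])
  rw [h1]
  have : (fun x => ρ (tmap l (A *ᵥ x))) = (ρ ∘ tmap l) ∘ (fun x => A *ᵥ x) := rfl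
  rw [this, ← Measure.map_map (hρ.comp (tmap_meas l)) hA', gam_inv A hA, ← Measure.map_map hρ (tmap_meas l), h2]
  rfl

lemma step0 {m d κ0 : ℕ} (hκ0 : κ0 = 1 ∨ κ0 = 2) (l : Fin (m+1) → Fin (d+1))
    (hl : ∀ j, Fintype.card {i // l i = j} = kap d κ0 j)
    (A : Matrix (Fin (m+1)) (Fin (m+1)) ℝ) (hA : Aᵀ * A = 1)
    (e0 : Fin (m+1) → ℝ) (he : e0 ⬝ᵥ e0 = 1)
    (μ : Measure (OG (m+1))) [μ.IsMulLeftInvariant] [IsProbabilityMeasure μ]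
    {α : Fin (d+1) → ℝ} (hα : StrictMono α)
    (F : OG (m+1) → ℂ) (g : (Fin d → ℝ) → ℂ) (hg : Measurable g)
    (hF : ∀ k : OG (m+1), ∀ z ∈ Dm α,
      tmap l (A *ᵥ ((k : Matrix (Fin (m+1)) (Fin (m+1)) ℝ)ᵀ *ᵥ e0)) = Tm α z → F k = g (fun i => z i.succ)) :
    ∫ k, F k ∂μ = ∫ z in Dm α, (z 0 ^ d * |VD (fun i : Fin d => z i.succ)| / |VD α| *
      ∏ j, gpr ((kap d κ0 j : ℝ)/2) (Tm α z j)) • g (fun i => z i.succ) := by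
  have hκp : 0 < κ0 := by omega
  have hcont : Continuous (Tm α) := continuous_iff_continuousAt.2 fun z => (Tm_deriv z).continuousAt
  have hemb := ContinuousOn.measurableEmbedding (Dm_meas α) hcont.continuousOn (Tm_inj hα)
  set H : (Fin (d+1) → ℝ) → ℂ := Function.extend ((Dm α).domRestrict (Tm α)) (fun z => g (fun i => (z : Fin (d+1) → ℝ) i.succ)) 0 with hH
  have hHm : Measurable H := hemb.measurable_extend (by
    refine hg.comp (measurable_pi_lambda _ fun i => ?_)
    exact (measurable_pi_apply _).comp measurable_subtype_coe) measurable_zero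
  have hHT : ∀ z ∈ Dm α, H (Tm α z) = g (fun i => z i.succ) := by
    intro z hz
    exact hemb.injective.extend_apply _ _ ⟨z, hz⟩
  have hH0 : ∀ t, (¬ ∀ j, 0 < t j) → H t = 0 := by
    intro t ht
    refine Function.extend_apply' _ _ _ ?_
    rintro ⟨z, hz⟩
    exact ht (hz ▸ fun j => Tm_pos hα z.2 j)
  have hHs : ∀ c : ℝ, 0 < c → ∀ x, H (c • x) = H x := by
    intro c hc x
    by_cases hx : ∀ j, 0 < x j
    · obtain ⟨z, hz, rfl⟩ := Tm_surj hα hx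
      have h1 : c • Tm α z = Tm α (Fin.cons (c * z 0) (fun i => z i.succ)) := by
        ext j; simp [Tm, mul_assoc]
      rw [h1, hHT z hz, hHT _ ⟨by simpa using mul_pos hc hz.1, fun i => by simpa using hz.2 i⟩]
      simp
    · rw [hH0 x hx, hH0]
      intro h; apply hx; intro j
      have := h j
      simp only [Pi.smul_apply, smul_eq_mul] at this
      exact (mul_pos_iff_of_pos_left hc).1 this
  have hkm : Measurable (fun k : OG (m+1) => tmap l (A *ᵥ ((k : Matrix (Fin (m+1)) (Fin (m+1)) ℝ)ᵀ *ᵥ e0))) := by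
    refine (tmap_meas l).comp ?_
    have : Continuous (fun k : OG (m+1) => (A *ᵥ ((k : Matrix (Fin (m+1)) (Fin (m+1)) ℝ)ᵀ *ᵥ e0))) := by fun_prop
    exact this.measurable
  have hpos : ∀ᵐ k : OG (m+1) ∂μ, ∀ j, 0 < tmap l (A *ᵥ ((k : Matrix (Fin (m+1)) (Fin (m+1)) ℝ)ᵀ *ᵥ e0)) j := by
    have h1 := sphT hκ0 l hl A hA e0 he μ (fun t => (∀ j, 0 < t j : Prop)) (measurableSet_setOfPred.1 meas_pos) (by
      intro c hc x
      ext
      refine forall_congr' fun j => ?_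
      simp only [Pi.smul_apply, smul_eq_mul]
      exact mul_pos_iff_of_pos_left hc)
    have h2 := PG_pos d κ0 hκp
    have h3 : ∀ᵐ p ∂((PG d κ0).map (fun t => (∀ j, 0 < t j : Prop))), p :=
      (ae_map_iff (measurableSet_setOfPred.1 meas_pos : Measurable (fun t : Fin (d+1) → ℝ => (∀ j, 0 < t j : Prop))).aemeasurable (by trivial)).2 h2
    rw [← h1] at h3
    exact (ae_map_iff ((measurableSet_setOfPred.1 meas_pos : Measurable (fun t : Fin (d+1) → ℝ => (∀ j, 0 < t j : Prop))).comp hkm).aemeasurable (by trivial)).1 h3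
  calc ∫ k, F k ∂μ = ∫ k, H (tmap l (A *ᵥ ((k : Matrix (Fin (m+1)) (Fin (m+1)) ℝ)ᵀ *ᵥ e0))) ∂μ := by
        refine integral_congr_ae ?_
        filter_upwards [hpos] with k hk
        obtain ⟨z, hz, hzt⟩ := Tm_surj hα hk
        rw [hF k z hz hzt.symm, ← hzt, hHT z hz]
    _ = ∫ y, y ∂(μ.map (fun k : OG (m+1) => H (tmap l (A *ᵥ ((k : Matrix (Fin (m+1)) (Fin (m+1)) ℝ)ᵀ *ᵥ e0))))) := by
        exact (integral_map (f := fun y : ℂ => y) (hHm.comp hkm).aemeasurable aestronglyMeasurable_id).symm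
    _ = ∫ t, H t ∂(PG d κ0) := by
        rw [sphT hκ0 l hl A hA e0 he μ H hHm hHs]
        exact integral_map (f := fun y : ℂ => y) hHm.aemeasurable aestronglyMeasurable_id
    _ = _ := by
        rw [PG_int d κ0 hκp hα]
        refine setIntegral_congr_fun (Dm_meas α) fun z hz => ?_
        simp only [hHT z hz]

end

section
open scoped ENNReal


def wr (d κ0 : ℕ) (r : ℝ) : ℝ := r ^ d * (r ^ ((κ0:ℝ)/2 - 1) * Real.exp (-(1/2 * r)))

lemma wr_int (d κ0 : ℕ) (hk : 0 < κ0) : 0 < ∫ r in Set.Ioi (0:ℝ), wr d κ0 r := by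
  have h := Real.integral_rpow_mul_exp_neg_mul_Ioi (a := d + (κ0:ℝ)/2) (r := 1/2) (by positivity) (by norm_num)
  have : ∫ r in Set.Ioi (0:ℝ), wr d κ0 r = ∫ t in Set.Ioi (0:ℝ), t ^ ((d + (κ0:ℝ)/2) - 1) * Real.exp (-(1/2 * t)) := by
    refine setIntegral_congr_fun measurableSet_Ioi fun r hr => ?_
    have hr' : (0:ℝ) < r := hr
    simp only [wr]
    rw [← mul_assoc, ← Real.rpow_natCast, ← Real.rpow_add hr', add_sub_assoc]
  rw [this, h]
  have := Real.Gamma_pos_of_pos (s := d + (κ0:ℝ)/2) (by positivity)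
  positivity

lemma box_det {d : ℕ} (α : Fin (d+1) → ℝ) (w : ℝ → ℂ) (hw : IntegrableOn w (Set.Ioi 0))
    (ψ : Fin d → ℝ → ℂ) (hψ : ∀ b i, IntegrableOn (ψ b) (Set.Ioo (α (Fin.castSucc i)) (α (Fin.succ i)))) :
    ∫ z in Dm α, w (z 0) * (of fun b i : Fin d => ψ b (z i.succ)).det =
      (∫ r in Set.Ioi (0:ℝ), w r) * (of fun b i : Fin d => ∫ x in Set.Ioo (α (Fin.castSucc i)) (α (Fin.succ i)), ψ b x).det := by
  have hD : Dm α = Set.univ.pi (Fin.cons (Set.Ioi (0:ℝ)) (fun i : Fin d => Set.Ioo (α i.castSucc) (α i.succ)) : Fin (d+1) → Set ℝ) := by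
    ext z; simp [Dm, Fin.forall_fin_succ]
  set S : Fin (d+1) → Set ℝ := (Fin.cons (Set.Ioi (0:ℝ)) (fun i : Fin d => Set.Ioo (α i.castSucc) (α i.succ))) with hS
  have hμ : (volume : Measure (Fin (d+1) → ℝ)).restrict (Dm α) = Measure.pi (fun j => volume.restrict (S j)) := by
    rw [hD, volume_pi, Measure.restrict_pi_pi]
  rw [hμ]
  set f : Equiv.Perm (Fin d) → Fin (d+1) → ℝ → ℂ := fun σ => Fin.cons w (fun i => ψ (σ i)) with hf
  have hint : ∀ σ j, Integrable (f σ j) (volume.restrict (S j)) := by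
    intro σ j
    refine Fin.cases ?_ (fun i => ?_) j
    · simpa [hf, hS, IntegrableOn] using hw
    · simpa [hf, hS, IntegrableOn] using hψ (σ i) i
  have e1 : ∀ z : Fin (d+1) → ℝ, w (z 0) * (of fun b i : Fin d => ψ b (z i.succ)).det =
      ∑ σ : Equiv.Perm (Fin d), ((Equiv.Perm.sign σ : ℤ) : ℂ) * ∏ j, f σ j (z j) := by
    intro z
    rw [det_apply', Finset.mul_sum]
    refine Finset.sum_congr rfl fun σ _ => ?_
    rw [Fin.prod_univ_succ]
    simp only [hf, Fin.cons_zero, Fin.cons_succ, of_apply]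
    ring
  simp_rw [e1]
  rw [integral_finsetSum _ (fun σ _ => (Integrable.fintype_prod_dep (hint σ)).const_mul _), det_apply', Finset.mul_sum]
  refine Finset.sum_congr rfl fun σ _ => ?_
  rw [integral_const_mul, integral_fintype_prod_eq_prod, Fin.prod_univ_succ]
  simp only [hf, hS, Fin.cons_zero, Fin.cons_succ, of_apply]
  ring

lemma step1 {m d κ0 : ℕ} (hκ0 : κ0 = 1 ∨ κ0 = 2) (l : Fin (m+1) → Fin (d+1))
    (hl : ∀ j, Fintype.card {i // l i = j} = kap d κ0 j)
    (A : Matrix (Fin (m+1)) (Fin (m+1)) ℝ) (hA : Aᵀ * A = 1)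
    (e0 : Fin (m+1) → ℝ) (he : e0 ⬝ᵥ e0 = 1)
    (μ : Measure (OG (m+1))) [μ.IsMulLeftInvariant] [IsProbabilityMeasure μ]
    {α : Fin (d+1) → ℝ} (hα : StrictMono α)
    (F : OG (m+1) → ℂ) (g : (Fin d → ℝ) → ℂ) (hg : Measurable g)
    (hF : ∀ k : OG (m+1), ∀ z ∈ Dm α,
      tmap l (A *ᵥ ((k : Matrix (Fin (m+1)) (Fin (m+1)) ℝ)ᵀ *ᵥ e0)) = Tm α z → F k = g (fun i => z i.succ))
    (ψ : Fin d → ℝ → ℂ) (hψ : ∀ b i, IntegrableOn (ψ b) (Set.Ioo (α (Fin.castSucc i)) (α (Fin.succ i))))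
    (C : ℂ) (hC : ∀ z ∈ Dm α, ((|VD (fun i : Fin d => z i.succ)| * ∏ i : Fin d, (z i.succ - α 0) ^ ((κ0:ℝ)/2 - 1) : ℝ) : ℂ) * g (fun i => z i.succ)
      = C * (of fun b i : Fin d => ψ b (z i.succ)).det) :
    ∫ k, F k ∂μ = ((K0 d κ0 * ∫ r in Set.Ioi (0:ℝ), wr d κ0 r : ℝ) : ℂ) *
      (((∏ i : Fin d, (α i.succ - α 0) ^ (1 - (κ0:ℝ)/2)) / |VD α| : ℝ) : ℂ) * C *
        (of fun b i : Fin d => ∫ x in Set.Ioo (α (Fin.castSucc i)) (α (Fin.succ i)), ψ b x).det := by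
  rw [step0 hκ0 l hl A hA e0 he μ hα F g hg hF]
  have hκp : 0 < κ0 := by omega
  have hw : IntegrableOn (fun r => (wr d κ0 r : ℂ)) (Set.Ioi 0) :=
    Integrable.ofReal (Integrable.of_integral_ne_zero (wr_int d κ0 hκp).ne')
  have h := box_det α (fun r => (wr d κ0 r : ℂ)) hw ψ hψ
  have e : ∫ z in Dm α, (z 0 ^ d * |VD (fun i : Fin d => z i.succ)| / |VD α| *
      ∏ j, gpr ((kap d κ0 j : ℝ)/2) (Tm α z j)) • g (fun i => z i.succ) =
      ∫ z in Dm α, ((K0 d κ0 : ℂ) * (((∏ i : Fin d, (α i.succ - α 0) ^ (1 - (κ0:ℝ)/2)) / |VD α| : ℝ) : ℂ) * C) *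
        ((wr d κ0 (z 0) : ℂ) * (of fun b i : Fin d => ψ b (z i.succ)).det) := by
    refine setIntegral_congr_fun (Dm_meas α) fun z hz => ?_
    rw [gpr_prod hα hz]
    have h2 := hC z hz
    rw [Complex.real_smul]
    calc _ = (K0 d κ0 : ℂ) * (((∏ i : Fin d, (α i.succ - α 0) ^ (1 - (κ0:ℝ)/2)) / |VD α| : ℝ) : ℂ) * (wr d κ0 (z 0) : ℂ) *
        (((|VD (fun i : Fin d => z i.succ)| * ∏ i : Fin d, (z i.succ - α 0) ^ ((κ0:ℝ)/2 - 1) : ℝ) : ℂ) * g (fun i => z i.succ)) := by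
          unfold wr; push_cast; ring
      _ = _ := by rw [h2]; ring
  rw [e, integral_const_mul, h, integral_complex_ofReal]
  push_cast
  ring

end

section
open scoped ENNReal


lemma mset_eq {ι ι' : Type} [Fintype ι] [Fintype ι'] (f : ι → ℝ) (f' : ι' → ℝ)
    (h : ∀ y : ℝ, 0 < y → ∏ i, (y + f i) = ∏ i, (y + f' i)) (a : ℝ) :
    Fintype.card {i // f i = a} = Fintype.card {i // f' i = a} := by
  have hp : ∏ i, (Polynomial.X - Polynomial.C (-f i)) = ∏ i, (Polynomial.X - Polynomial.C (-f' i)) := by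
    refine Polynomial.eq_of_infinite_eval_eq _ _ ((Set.Ioi_infinite (0:ℝ)).mono fun y hy => ?_)
    simpa [Polynomial.eval_prod] using h y hy
  have hr := congrArg Polynomial.roots hp
  have hcount : ∀ {κ : Type} [Fintype κ] (F : κ → ℝ), (∏ i, (Polynomial.X - Polynomial.C (-F i))).roots.count (-a) = Fintype.card {i // F i = a} := by
    intro κ _ F
    have : (∏ i, (Polynomial.X - Polynomial.C (-F i))).roots = Finset.univ.val.map (fun i => -F i) := by
      have := Polynomial.roots_multiset_prod_X_sub_C (Finset.univ.val.map (fun i => -F i))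
      rw [Multiset.map_map] at this
      exact this
    rw [this, Multiset.count_map, Fintype.card_subtype]
    simp only [neg_inj, Finset.card_def, Finset.filter_val, eq_comm]
  rw [← hcount f, ← hcount f', hr]

lemma spec_sym {m : ℕ} (S : Matrix (Fin m) (Fin m) ℝ) (hS : Sᵀ = S) :
    ∃ (A : Matrix (Fin m) (Fin m) ℝ) (ev : Fin m → ℝ), Aᵀ * A = 1 ∧ A * Aᵀ = 1 ∧ S = Aᵀ * diagonal ev * A := by
  have hH : S.IsHermitian := by rw [Matrix.IsHermitian, conjTranspose_eq_transpose_of_trivial, hS]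
  have h1 := hH.spectral_theorem
  rw [Unitary.conjStarAlgAut_apply] at h1
  have h2 := Unitary.mul_star_self_of_mem hH.eigenvectorUnitary.2
  have h3 := Unitary.star_mul_self_of_mem hH.eigenvectorUnitary.2
  rw [star_eq_conjTranspose, conjTranspose_eq_transpose_of_trivial] at h1 h2 h3
  refine ⟨(hH.eigenvectorUnitary : Matrix (Fin m) (Fin m) ℝ)ᵀ, hH.eigenvalues, ?_, ?_, ?_⟩
  · rw [transpose_transpose]; exact h2
  · rw [transpose_transpose]; exact h3
  · rw [transpose_transpose]; exact h1

lemma conj_diag_entry {m : ℕ} (k M : Matrix (Fin m) (Fin m) ℝ) (p : Fin m) :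
    (k * M * kᵀ) p p = (kᵀ *ᵥ Pi.single p 1) ⬝ᵥ (M *ᵥ (kᵀ *ᵥ Pi.single p 1)) := by
  rw [mulVec_single_one]
  simp only [dotProduct, mulVec, mul_apply, transpose_apply, col_apply, Finset.sum_mul, Finset.mul_sum]
  rw [Finset.sum_comm]
  exact Finset.sum_congr rfl fun i _ => Finset.sum_congr rfl fun j _ => by ring

lemma antisym_quad {m : ℕ} (M : Matrix (Fin m) (Fin m) ℝ) (hM : Mᵀ = -M) (u : Fin m → ℝ) : u ⬝ᵥ (M *ᵥ u) = 0 := by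
  have h : u ⬝ᵥ (M *ᵥ u) = - (u ⬝ᵥ (M *ᵥ u)) := by
    conv_lhs => rw [dotProduct_mulVec, ← mulVec_transpose, hM, neg_mulVec, neg_dotProduct, dotProduct_comm]
  linarith

lemma step2 {m d κ0 : ℕ} (X : Matrix (Fin (m+1)) (Fin (m+1)) ℝ) (hX : Xᵀ = -X)
    {α : Fin (d+1) → ℝ} (hα : StrictMono α) (hα0 : 0 ≤ α 0)
    (hdet : ∀ t : ℝ, 0 < t → (t • (1 : Matrix (Fin (m+1)) (Fin (m+1)) ℝ) - X).det ^ 2 = ∏ j, (t^2 + α j) ^ kap d κ0 j) :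
    ∃ (l : Fin (m+1) → Fin (d+1)) (A : Matrix (Fin (m+1)) (Fin (m+1)) ℝ), Aᵀ * A = 1 ∧
      (∀ j, Fintype.card {i // l i = j} = kap d κ0 j) ∧
      ∀ k : OG (m+1), ∀ z ∈ Dm α,
        tmap l (A *ᵥ ((k : Matrix (Fin (m+1)) (Fin (m+1)) ℝ)ᵀ *ᵥ (Pi.single (Fin.last m) 1))) = Tm α z →
        ∀ t : ℝ, 0 < t → (t • (1 : Matrix (Fin m) (Fin m) ℝ) - trunc ((k : Matrix (Fin (m+1)) (Fin (m+1)) ℝ) * X * (k : Matrix (Fin (m+1)) (Fin (m+1)) ℝ)ᵀ)).det * ∏ j, (t^2 + α j) =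
          (t • (1 : Matrix (Fin (m+1)) (Fin (m+1)) ℝ) - X).det * t * ∏ i : Fin d, (t^2 + z i.succ) := by
  have hαn : ∀ j, 0 ≤ α j := fun j => hα0.trans (hα.monotone (Fin.zero_le j))
  obtain ⟨A, ev, hA, hA', hS⟩ := spec_sym (-(X * X)) (by simp [hX])
  have hd2 : ∀ t : ℝ, (t • (1 : Matrix (Fin (m+1)) (Fin (m+1)) ℝ) - X) * (t • 1 + X) = Aᵀ * diagonal (fun i => t^2 + ev i) * A := by
    intro t
    have h1 : diagonal (fun i => t^2 + ev i) = (t^2) • (1 : Matrix (Fin (m+1)) (Fin (m+1)) ℝ) + diagonal ev := by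
      ext i j; by_cases h : i = j <;> simp [diagonal, one_apply, h]
    have h2 : Aᵀ * (t^2 • (1 : Matrix (Fin (m+1)) (Fin (m+1)) ℝ) + diagonal ev) * A = t^2 • 1 + -(X*X) := by
      rw [Matrix.mul_add, Matrix.add_mul, ← hS]; simp [hA]
    rw [h1, h2]
    simp only [sub_mul, mul_add, smul_mul_assoc, mul_smul_comm, one_mul, mul_one, smul_sub, smul_smul, pow_two]
    abel
  have hplus : ∀ t : ℝ, (t • (1 : Matrix (Fin (m+1)) (Fin (m+1)) ℝ) + X).det = (t • (1 : Matrix (Fin (m+1)) (Fin (m+1)) ℝ) - X).det := by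
    intro t
    rw [← det_transpose]; simp [hX, sub_eq_add_neg]
  have hdA : A.det * A.det = 1 := by
    have := congrArg det hA
    rwa [det_mul, det_transpose, det_one] at this
  have hevp : ∀ y : ℝ, 0 < y → ∏ i, (y + ev i) = ∏ p : (Σ j : Fin (d+1), Fin (kap d κ0 j)), (y + α p.1) := by
    intro y hy
    have h := hdet (Real.sqrt y) (Real.sqrt_pos.2 hy)
    have h2 := congrArg det (hd2 (Real.sqrt y))
    rw [det_mul, hplus, ← pow_two, h, det_mul, det_mul, det_diagonal, det_transpose, Real.sq_sqrt hy.le] at h2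
    rw [Fintype.prod_sigma]
    simp only [Finset.prod_const, Finset.card_univ, Fintype.card_fin]
    rw [h2]
    calc _ = (A.det * A.det) * ∏ i, (y + ev i) := by rw [hdA, one_mul]
      _ = _ := by ring
  have hcard := mset_eq ev _ hevp
  have hex : ∀ i, ∃ j, α j = ev i := by
    intro i
    have h1 : 0 < Fintype.card {i' // ev i' = ev i} := Fintype.card_pos_iff.2 ⟨⟨i, rfl⟩⟩
    rw [hcard] at h1
    obtain ⟨p⟩ := Fintype.card_pos_iff.1 h1
    exact ⟨p.1.1, p.2⟩
  choose l hl using hex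
  have hli : ∀ i j, l i = j ↔ ev i = α j := by
    intro i j
    constructor
    · rintro rfl; exact (hl i).symm
    · intro h; exact hα.injective ((hl i).trans h)
  refine ⟨l, A, hA, ?_, ?_⟩
  · intro j
    rw [Fintype.card_congr (Equiv.subtypeEquivRight fun i => hli i j), hcard]
    have : Fintype.card {p : (Σ j : Fin (d+1), Fin (kap d κ0 j)) // α p.1 = α j} = Fintype.card (Fin (kap d κ0 j)) := by
      refine Fintype.card_congr ⟨fun p => Fin.cast (by rw [hα.injective p.2]) p.1.2, fun q => ⟨⟨j, q⟩, rfl⟩, ?_, fun q => rfl⟩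
      rintro ⟨⟨j', q⟩, hq⟩
      obtain rfl := hα.injective hq
      rfl
    rw [this, Fintype.card_fin]
  · intro k z hz hT t ht
    set kk := (k : Matrix (Fin (m+1)) (Fin (m+1)) ℝ) with hkk
    set u := kkᵀ *ᵥ (Pi.single (Fin.last m) (1:ℝ)) with hu
    have hevn : ∀ i, 0 ≤ ev i := fun i => hl i ▸ hαn _
    set G := Aᵀ * diagonal (fun i => (t^2 + ev i)⁻¹) * A with hG
    have hDG : (t • (1 : Matrix (Fin (m+1)) (Fin (m+1)) ℝ) - X) * (t • 1 + X) * G = 1 := by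
      rw [hd2, hG]
      calc _ = Aᵀ * (diagonal (fun i => t^2 + ev i) * (A * Aᵀ) * diagonal (fun i => (t^2 + ev i)⁻¹)) * A := by
            simp only [Matrix.mul_assoc]
        _ = 1 := by
            rw [hA', Matrix.mul_one, diagonal_mul_diagonal]
            have : (fun i => (t^2 + ev i) * (t^2 + ev i)⁻¹) = fun _ => 1 := by
              ext i; exact mul_inv_cancel₀ (by have := hevn i; positivity)
            rw [this, diagonal_one, Matrix.mul_one, hA]
    have hGD : G * ((t • (1 : Matrix (Fin (m+1)) (Fin (m+1)) ℝ) - X) * (t • 1 + X)) = 1 := mul_eq_one_comm.1 hDG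
    have hcomm : X * ((t • (1 : Matrix (Fin (m+1)) (Fin (m+1)) ℝ) - X) * (t • 1 + X)) = ((t • (1 : Matrix (Fin (m+1)) (Fin (m+1)) ℝ) - X) * (t • 1 + X)) * X := by
      simp only [sub_mul, mul_add, mul_sub, add_mul, smul_mul_assoc, mul_smul_comm, one_mul, mul_one, Matrix.mul_assoc]
    have hGX : G * X = X * G := by
      calc G * X = G * X * (((t • (1 : Matrix (Fin (m+1)) (Fin (m+1)) ℝ) - X) * (t • 1 + X)) * G) := by rw [hDG, Matrix.mul_one]
        _ = G * (X * ((t • (1 : Matrix (Fin (m+1)) (Fin (m+1)) ℝ) - X) * (t • 1 + X))) * G := by simp only [Matrix.mul_assoc]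
        _ = (G * ((t • (1 : Matrix (Fin (m+1)) (Fin (m+1)) ℝ) - X) * (t • 1 + X))) * X * G := by rw [hcomm]; simp only [Matrix.mul_assoc]
        _ = X * G := by rw [hGD, Matrix.one_mul]
    have hGt : Gᵀ = G := by
      rw [hG]; simp [Matrix.transpose_mul, Matrix.mul_assoc]
    have hanti : (X * G)ᵀ = -(X * G) := by rw [transpose_mul, hGt, hX, Matrix.mul_neg, hGX]
    have hk1 : kk * kkᵀ = 1 := OG_mul_t k
    have hk2 : kkᵀ * kk = 1 := OG_t_mul k
    have hB : t • (1 : Matrix (Fin (m+1)) (Fin (m+1)) ℝ) - kk * X * kkᵀ = kk * (t • 1 - X) * kkᵀ := by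
      rw [Matrix.mul_sub, Matrix.sub_mul]
      simp [hk1]
    set B := t • (1 : Matrix (Fin (m+1)) (Fin (m+1)) ℝ) - kk * X * kkᵀ with hBd
    have hBdet : B.det = (t • (1 : Matrix (Fin (m+1)) (Fin (m+1)) ℝ) - X).det := by
      have : kk.det * kkᵀ.det = 1 := by rw [← det_mul, hk1, det_one]
      rw [hB, det_mul, det_mul, mul_right_comm, this, one_mul]
    have hBW : B * (kk * ((t • 1 + X) * G) * kkᵀ) = 1 := by
      calc B * (kk * ((t • 1 + X) * G) * kkᵀ) = kk * ((t • 1 - X) * (kkᵀ * kk) * ((t • 1 + X) * G)) * kkᵀ := by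
            rw [hB]; simp only [Matrix.mul_assoc]
        _ = kk * ((t • 1 - X) * (t • 1 + X) * G) * kkᵀ := by rw [hk2, Matrix.mul_one, Matrix.mul_assoc (t • 1 - X)]
        _ = 1 := by rw [hDG, Matrix.mul_one, hk1]
    have hadj : adjugate B = B.det • (kk * ((t • 1 + X) * G) * kkᵀ) := by
      calc adjugate B = adjugate B * (B * (kk * ((t • 1 + X) * G) * kkᵀ)) := by rw [hBW, Matrix.mul_one]
        _ = _ := by rw [← Matrix.mul_assoc, adjugate_mul, Matrix.smul_mul, Matrix.one_mul]
    have hent := congrFun (congrFun hadj (Fin.last m)) (Fin.last m)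
    have htr : B.submatrix (Fin.last m).succAbove (Fin.last m).succAbove = t • (1 : Matrix (Fin m) (Fin m) ℝ) - trunc (kk * X * kkᵀ) := by
      ext i j
      simp [hBd, trunc, one_apply]
    rw [adjugate_fin_succ_eq_det_submatrix, htr, Matrix.smul_apply, conj_diag_entry, ← hu, Even.neg_one_pow ⟨_, rfl⟩, one_mul, hBdet] at hent
    have hq : u ⬝ᵥ (((t • 1 + X) * G) *ᵥ u) = t * ∑ j, Tm α z j / (t^2 + α j) := by
      rw [Matrix.add_mul, add_mulVec, dotProduct_add, antisym_quad _ hanti, add_zero, Matrix.smul_mul, Matrix.one_mul, smul_mulVec, dotProduct_smul, smul_eq_mul]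
      congr 1
      have : u ⬝ᵥ (G *ᵥ u) = ∑ i, (A *ᵥ u) i ^ 2 / (t^2 + ev i) := by
        rw [hG, ← mulVec_mulVec, ← mulVec_mulVec, dotProduct_mulVec, vecMul_transpose, dotProduct]
        refine Finset.sum_congr rfl fun i _ => ?_
        rw [mulVec_diagonal]; ring
      rw [this, ← hT]
      simp only [tmap, Finset.sum_div]
      rw [← Finset.sum_fiberwise (s := Finset.univ) (g := l)]
      refine Finset.sum_congr rfl fun j _ => Finset.sum_congr rfl fun i hi => ?_
      rw [(hli i j).1 (Finset.mem_filter.1 hi).2]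
    have hz0 : z 0 = 1 := by
      rw [← Tm_sum hα.injective z, ← hT]
      simp only [tmap]
      rw [Finset.sum_fiberwise]
      have h1 := dot_orth hA u
      have h2 := dot_orth (A := kkᵀ) (by rw [transpose_transpose, hk1]) (Pi.single (Fin.last m) 1)
      rw [← hu] at h2
      have h3 : (Pi.single (Fin.last m) (1:ℝ) : Fin (m+1) → ℝ) ⬝ᵥ Pi.single (Fin.last m) 1 = 1 := by simp
      calc _ = (A *ᵥ u) ⬝ᵥ (A *ᵥ u) := by simp [dotProduct, pow_two]
        _ = 1 := by rw [h1, h2, h3]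
    have hL := congrArg (Polynomial.eval (-t^2)) (Qp_Tm hα.injective z)
    rw [Qp_eval, hz0] at hL
    simp only [map_one, one_mul, Polynomial.eval_prod, Polynomial.eval_sub, Polynomial.eval_X, Polynomial.eval_C] at hL
    have hneg : ∀ c : Fin d → ℝ, ∏ i, (-t^2 - c i) = (-1)^d * ∏ i, (t^2 + c i) := by
      intro c
      have h : ∀ i, -t^2 - c i = (-1) * (t^2 + c i) := fun i => by ring
      simp_rw [h, Finset.prod_mul_distrib, Finset.prod_const, Finset.card_univ, Fintype.card_fin]
    have hL2 : ∀ j, Tm α z j * ∏ i, (-t ^ 2 - α (j.succAbove i)) = (-1)^d * (Tm α z j * ∏ i, (t ^ 2 + α (j.succAbove i))) := fun j => by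
      rw [hneg fun i => α (j.succAbove i), mul_left_comm]
    rw [hneg fun i => z i.succ, Finset.sum_congr rfl fun j _ => hL2 j, ← Finset.mul_sum] at hL
    have hL' := mul_left_cancel₀ (pow_ne_zero d (by norm_num : (-1:ℝ) ≠ 0)) hL
    have hsum : (∑ j, Tm α z j / (t^2 + α j)) * ∏ j, (t^2 + α j) = ∏ i : Fin d, (t^2 + z i.succ) := by
      rw [← hL', Finset.sum_mul]
      refine Finset.sum_congr rfl fun j _ => ?_
      rw [Fin.prod_univ_succAbove _ j]
      have : t^2 + α j ≠ 0 := by have := hαn j; positivity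
      field_simp
    rw [hent, hq, smul_eq_mul, ← hsum]
    ring

end

section
open scoped ENNReal


def Kd (d κ0 : ℕ) : ℝ := K0 d κ0 * ∫ r in Set.Ioi (0:ℝ), wr d κ0 r

lemma Kd_pos (d κ0 : ℕ) (hk : 0 < κ0) : 0 < Kd d κ0 := by
  refine mul_pos ?_ (wr_int d κ0 hk)
  have := Real.Gamma_pos_of_pos (s := (κ0:ℝ)/2) (by positivity)
  unfold K0; positivity

lemma VD_pos {N : ℕ} {x : Fin N → ℝ} (hx : StrictMono x) : 0 < VD x := by
  rw [VD, det_vandermonde]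
  exact Finset.prod_pos fun i _ => Finset.prod_pos fun j hj => sub_pos.2 (hx (Finset.mem_Ioi.1 hj))

/-- matrix of powers -/
def PD {N : ℕ} (τ : Fin N → ℂ) (x : Fin N → ℝ) : ℂ := (of fun b i => ((x i : ℝ) : ℂ) ^ τ b).det

lemma PD_meas {N : ℕ} (τ : Fin N → ℂ) : Measurable (PD τ) := by
  unfold PD
  simp only [det_apply, of_apply]
  refine Finset.measurable_sum _ fun σ _ => Measurable.const_smul ?_ _
  refine Finset.measurable_prod _ fun i _ => ?_
  exact (Complex.measurable_ofReal.comp (measurable_pi_apply i)).pow_const _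

lemma VD_meas {N : ℕ} : Measurable (VD : (Fin N → ℝ) → ℝ) := by
  have : Continuous (VD : (Fin N → ℝ) → ℝ) := by
    unfold VD
    simp only [det_vandermonde]
    fun_prop
  exact this.measurable

lemma trunc_anti {m : ℕ} (k X : Matrix (Fin (m+1)) (Fin (m+1)) ℝ) (hX : Xᵀ = -X) :
    (trunc (k * X * kᵀ))ᵀ = - trunc (k * X * kᵀ) := by
  have : (k * X * kᵀ)ᵀ = -(k * X * kᵀ) := by
    rw [transpose_mul, transpose_mul, transpose_transpose, hX]; simp [Matrix.mul_assoc]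
  unfold trunc
  rw [transpose_submatrix, this]; rfl

def bord {d : ℕ} (f : Fin d → Fin (d+1) → ℂ) : Matrix (Fin (d+1)) (Fin (d+1)) ℂ :=
  of fun b j => Fin.lastCases (motive := fun _ => ℂ) 1 (fun b' => f b' j) b

lemma bord_det {d : ℕ} (f : Fin d → Fin (d+1) → ℂ) :
    (bord f).det = (-1)^d * (of fun b i : Fin d => f b i.succ - f b i.castSucc).det := by
  have h1 : (bord f).det = (of fun (b j : Fin (d+1)) => Fin.cases (motive := fun _ => ℂ) (bord f b 0) (fun j' => bord f b j'.succ - bord f b j'.castSucc) j : Matrix (Fin (d+1)) (Fin (d+1)) ℂ).det := by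
    refine Matrix.det_eq_of_forall_col_eq_smul_add_pred (fun _ => 1) (fun i => by simp) (fun i j => by simp)
  rw [h1, Matrix.det_succ_row _ (Fin.last d), Fin.sum_univ_succ]
  rw [Finset.sum_eq_zero (fun j _ => by simp [bord])]
  simp only [bord, of_apply, Fin.cases_zero, Fin.lastCases_last, mul_one, Fin.val_last, Fin.val_zero, add_zero]
  congr 2
  ext i j
  simp

lemma bord_det0 {d : ℕ} (f : Fin d → Fin (d+1) → ℂ) (h0 : ∀ b, f b 0 = 0) :
    (bord f).det = (-1)^d * (of fun b i : Fin d => f b i.succ).det := by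
  rw [Matrix.det_succ_column_zero, Fin.sum_univ_castSucc]
  rw [Finset.sum_eq_zero (fun j _ => by simp [bord, h0])]
  simp only [bord, of_apply, Fin.lastCases_last, mul_one, Fin.val_last, zero_add]
  congr 2
  ext i j
  simp

lemma stepA {m d κ0 : ℕ} (hκ0 : κ0 = 1 ∨ κ0 = 2)
    (μ : Measure (OG (m+1))) [μ.IsMulLeftInvariant] [IsProbabilityMeasure μ]
    (X : Matrix (Fin (m+1)) (Fin (m+1)) ℝ) (hX : Xᵀ = -X)
    {α : Fin (d+1) → ℝ} (hα : StrictMono α) (hα0 : 0 ≤ α 0) (hα1 : κ0 = 1 → α 0 = 0)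
    (hdet : ∀ t : ℝ, 0 < t → (t • (1 : Matrix (Fin (m+1)) (Fin (m+1)) ℝ) - X).det ^ 2 = ∏ j, (t^2 + α j) ^ kap d κ0 j)
    (F : Matrix (Fin m) (Fin m) ℝ → ℂ) (C : ℂ) (τ : Fin d → ℂ) (hτ : ∀ b, 0 ≤ (τ b).re)
    (hF : ∀ Y : Matrix (Fin m) (Fin m) ℝ, Yᵀ = -Y → ∀ c : Fin d → ℝ, StrictMono c → (∀ i, 0 < c i) →
      (∀ t : ℝ, 0 < t → (t • (1 : Matrix (Fin m) (Fin m) ℝ) - Y).det * ∏ j, (t^2 + α j) =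
          (t • (1 : Matrix (Fin (m+1)) (Fin (m+1)) ℝ) - X).det * t * ∏ i : Fin d, (t^2 + c i)) →
      F Y = C * PD τ c / VD c) :
    ∫ k : OG (m+1), F (trunc ((k : Matrix (Fin (m+1)) (Fin (m+1)) ℝ) * X * (k : Matrix (Fin (m+1)) (Fin (m+1)) ℝ)ᵀ)) ∂μ
     = (Kd d κ0 : ℂ) * (((∏ i : Fin d, (α i.succ - α 0) ^ (1 - (κ0:ℝ)/2)) / VD α : ℝ) : ℂ) * C *
        ((∏ b, (τ b + (κ0:ℂ)/2)⁻¹) * ((-1)^d * (bord fun b j => (α j : ℂ) ^ (τ b + (κ0:ℂ)/2)).det)) := by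
  obtain ⟨l, A, hA, hl, hk⟩ := step2 X hX hα hα0 hdet
  have hκr : (0:ℝ) < κ0 := by rcases hκ0 with h | h <;> simp [h]
  have hαn : ∀ j, 0 ≤ α j := fun j => hα0.trans (hα.monotone (Fin.zero_le j))
  have hcz : ∀ z ∈ Dm α, StrictMono (fun i : Fin d => z i.succ) ∧ ∀ i : Fin d, 0 < z i.succ := by
    intro z hz
    refine ⟨fun i j hij => ?_, fun i => (hαn _).trans_lt (hz.2 i).1⟩
    refine (hz.2 i).2.trans_le (le_trans (hα.monotone ?_) (hz.2 j).1.le)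
    exact Fin.succ_le_castSucc_iff.2 hij
  have hre : ∀ b, -1 < (τ b + (κ0:ℂ)/2 - 1).re := by
    intro b
    have := hτ b
    have h2 : ((κ0:ℂ)/2).re = (κ0:ℝ)/2 := by
      rw [show (κ0:ℂ)/2 = (((κ0:ℝ)/2 : ℝ) : ℂ) by push_cast; rfl, Complex.ofReal_re]
    simp only [Complex.sub_re, Complex.add_re, h2, Complex.one_re]
    linarith
  have h := step1 hκ0 l hl A hA (Pi.single (Fin.last m) 1) (by simp) μ hα
    (fun k => F (trunc ((k : Matrix (Fin (m+1)) (Fin (m+1)) ℝ) * X * (k : Matrix (Fin (m+1)) (Fin (m+1)) ℝ)ᵀ)))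
    (fun c => C * PD τ c / VD c) (((PD_meas τ).const_mul C).div (Complex.measurable_ofReal.comp VD_meas))
    (fun k z hz hT => hF _ (trunc_anti _ X hX) _ (hcz z hz).1 (hcz z hz).2 (hk k z hz hT))
    (fun b x => (x:ℂ) ^ (τ b + (κ0:ℂ)/2 - 1)) (fun b i => ?_) C (fun z hz => ?_)
  · rw [h, abs_of_pos (VD_pos hα)]
    congr 1
    have hi : ∀ b (i : Fin d), ∫ x in Set.Ioo (α (Fin.castSucc i)) (α (Fin.succ i)), (x:ℂ) ^ (τ b + (κ0:ℂ)/2 - 1) =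
        (τ b + (κ0:ℂ)/2)⁻¹ * ((α i.succ : ℂ) ^ (τ b + (κ0:ℂ)/2) - (α i.castSucc : ℂ) ^ (τ b + (κ0:ℂ)/2)) := by
      intro b i
      rw [← integral_Ioc_eq_integral_Ioo, ← intervalIntegral.integral_of_le (hα Fin.castSucc_lt_succ).le,
        integral_cpow (Or.inl (hre b)), sub_add_cancel, div_eq_inv_mul]
    simp only [hi]
    rw [bord_det, ← mul_assoc ((-1:ℂ)^d), ← mul_pow, neg_one_mul, neg_neg, one_pow, one_mul]
    exact Matrix.det_mul_column (fun b => (τ b + (κ0:ℂ)/2)⁻¹) (of fun b i : Fin d => (α i.succ : ℂ) ^ (τ b + (κ0:ℂ)/2) - (α i.castSucc : ℂ) ^ (τ b + (κ0:ℂ)/2))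
  · have := intervalIntegral.intervalIntegrable_cpow' (a := α (Fin.castSucc i)) (b := α i.succ) (hre b)
    exact ((intervalIntegrable_iff_integrableOn_Ioc_of_le (hα Fin.castSucc_lt_succ).le).1 this).mono_set Set.Ioo_subset_Ioc_self
  · obtain ⟨hm, hp⟩ := hcz z hz
    have hV := VD_pos hm
    rw [abs_of_pos hV]
    have hcol : (of fun b i : Fin d => (z i.succ : ℂ) ^ (τ b + (κ0:ℂ)/2 - 1)).det = ((∏ i : Fin d, (z i.succ - α 0) ^ ((κ0:ℝ)/2 - 1) : ℝ) : ℂ) * PD τ (fun i => z i.succ) := by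
      rw [PD, Complex.ofReal_prod, ← Matrix.det_mul_row]
      congr 1
      ext b i
      simp only [of_apply]
      have hz0 : (z i.succ : ℂ) ≠ 0 := by exact_mod_cast (hp i).ne'
      rcases hκ0 with h | h
      · rw [hα1 h, sub_zero, Complex.ofReal_cpow (hp i).le, ← Complex.cpow_add _ _ hz0]
        congr 1; push_cast; ring
      · rw [h]; norm_num
    rw [hcol]
    have : ((VD fun i : Fin d => z i.succ : ℝ) : ℂ) ≠ 0 := by exact_mod_cast hV.ne'
    push_cast
    field_simp

end

section
open scoped ENNReal


def tau (n : ℕ) (e : ℕ → ℂ) (b : Fin n) : ℂ := ∑ j ∈ Finset.Ico (b:ℕ) n, (e j + 1) - 1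

lemma tau_last (n : ℕ) (e : ℕ → ℂ) : tau (n+1) e (Fin.last n) = e n := by
  simp [tau]

lemma tau_castSucc (n : ℕ) (e : ℕ → ℂ) (b : Fin n) : tau (n+1) e b.castSucc = tau n e b + 1 + e n := by
  unfold tau
  rw [Fin.val_castSucc, Finset.sum_Ico_succ_top b.2.le]; ring

lemma tau_re {n : ℕ} {e : ℕ → ℂ} (he : ∀ j < n, 0 ≤ (e j).re) (b : Fin n) : 0 ≤ (tau n e b).re := by
  unfold tau
  rw [Finset.sum_eq_sum_Ico_succ_bot b.2]
  have : 0 ≤ (∑ j ∈ Finset.Ico ((b:ℕ)+1) n, (e j + 1)).re := by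
    rw [Complex.re_sum]
    refine Finset.sum_nonneg fun j hj => ?_
    have := he j (Finset.mem_Ico.1 hj).2
    simp; linarith
  have := he b b.2
  simp only [Complex.sub_re, Complex.add_re, Complex.one_re]; linarith

def CE : ℕ → (ℕ → ℂ) → ℂ
  | 0, _ => 1
  | n+1, e => (Kd n 2 : ℂ) * ((Kd n 1 : ℂ) * CE n e * ∏ b, (tau n e b + 1/2)⁻¹) * ((∏ b, (tau n e b + 1)⁻¹) * (-1)^n)

lemma CE_ne {n : ℕ} {e : ℕ → ℂ} (he : ∀ j, j + 1 < n → 0 ≤ (e j).re) : CE n e ≠ 0 := by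
  induction n with
  | zero => simp [CE]
  | succ n ih =>
    have hr := tau_re (n := n) (e := e) (fun j hj => he j (by omega))
    have h1 : (Kd n 1 : ℂ) ≠ 0 := by exact_mod_cast (Kd_pos n 1 (by norm_num)).ne'
    have h2 : (Kd n 2 : ℂ) ≠ 0 := by exact_mod_cast (Kd_pos n 2 (by norm_num)).ne'
    have h3 : ∏ b, (tau n e b + 1/2)⁻¹ ≠ 0 := Finset.prod_ne_zero_iff.2 fun b _ => inv_ne_zero fun h => by
      have := congrArg Complex.re h
      have := hr b
      norm_num at *; linarith
    have h4 : ∏ b, (tau n e b + 1)⁻¹ ≠ 0 := Finset.prod_ne_zero_iff.2 fun b _ => inv_ne_zero fun h => by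
      have := congrArg Complex.re h
      have := hr b
      norm_num at *; linarith
    have h5 := ih (fun j hj => he j (by omega))
    unfold CE
    exact mul_ne_zero (mul_ne_zero h2 (mul_ne_zero (mul_ne_zero h1 h5) h3)) (mul_ne_zero h4 (pow_ne_zero _ (by norm_num)))

lemma VD_cons {n : ℕ} (β : Fin n → ℝ) : VD (Fin.cons 0 β : Fin (n+1) → ℝ) = (∏ i, β i) * VD β := by
  rw [VD, VD, det_vandermonde, det_vandermonde, Fin.prod_univ_succ]
  congr 1
  · simp
  · refine Finset.prod_congr rfl fun i _ => ?_
    rw [Fin.prod_Ioi_succ]; simp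

def PE (n : ℕ) : Prop := ∀ (m : ℕ) (hm : m = 2 * n) (e : ℕ → ℂ), (∀ j, j + 1 < n → 0 < (e j).re) →
  ∀ (μ : Measure (OG m)), μ.IsMulLeftInvariant → IsProbabilityMeasure μ →
  ∀ X : Matrix (Fin m) (Fin m) ℝ, Xᵀ = -X → ∀ β : Fin n → ℝ, StrictMono β → (∀ i, 0 < β i) →
  (∀ t : ℝ, 0 < t → (t • (1 : Matrix (Fin m) (Fin m) ℝ) - X).det = ∏ i, (t^2 + β i)) →
  FI m n (by omega) e μ X = CE n e * PD (tau n e) β / VD β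

def PO (n : ℕ) : Prop := ∀ (m : ℕ) (hm : m = 2 * n + 1) (e : ℕ → ℂ), (∀ j, j < n → 0 < (e j).re) →
  ∀ (μ : Measure (OG m)), μ.IsMulLeftInvariant → IsProbabilityMeasure μ →
  ∀ X : Matrix (Fin m) (Fin m) ℝ, Xᵀ = -X → ∀ β : Fin n → ℝ, StrictMono β → (∀ i, 0 < β i) →
  (∀ t : ℝ, 0 < t → (t • (1 : Matrix (Fin m) (Fin m) ℝ) - X).det = t * ∏ i, (t^2 + β i)) →
  FI m n (by omega) e μ X = ((Kd n 1 : ℂ) * CE n e * ∏ b, (tau n e b + 1/2)⁻¹) * PD (tau n e) β / VD β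

lemma PE_PO (n : ℕ) (h : PE n) : PO n := by
  rintro m rfl e he μ hμ hμ1 X hX β hβ hβ0 hdet
  obtain ⟨ν, hν, hν1⟩ := exists_haar (2*n)
  rw [FI_rec (m := 2*n) le_rfl he μ ν X]
  have hα : StrictMono (Fin.cons 0 β : Fin (n+1) → ℝ) := by
    intro i j hij
    induction j using Fin.cases with
    | zero => exact absurd hij (Fin.not_lt_zero i)
    | succ j =>
      induction i using Fin.cases with
      | zero => simpa using hβ0 j
      | succ i => simpa using hβ (Fin.succ_lt_succ_iff.1 hij)
  rw [stepA (Or.inl rfl) μ X hX hα le_rfl (fun _ => rfl) ?_ (FI (2*n) n le_rfl e ν) (CE n e) (tau n e)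
    (tau_re fun j hj => (he j hj).le)]
  · rw [bord_det0 _ ?_, VD_cons]
    · have hV : ((VD β : ℝ) : ℂ) ≠ 0 := by exact_mod_cast (VD_pos hβ).ne'
      have hc : (of fun (b i : Fin n) => ((Fin.cons 0 β : Fin (n+1) → ℝ) i.succ : ℂ) ^ (tau n e b + ((1:ℕ):ℂ)/2)).det =
          (∏ i, ((β i : ℂ)) ^ ((1:ℂ)/2)) * PD (tau n e) β := by
        rw [PD, ← Matrix.det_mul_row]
        congr 1
        ext b i
        have : (β i : ℂ) ≠ 0 := by exact_mod_cast (hβ0 i).ne'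
        simp only [of_apply, Fin.cons_succ]
        rw [← Complex.cpow_add _ _ this]; congr 1; push_cast; ring
      have hs : ∀ i, (β i : ℂ) = (β i : ℂ) ^ ((1:ℂ)/2) * (β i : ℂ) ^ ((1:ℂ)/2) := by
        intro i
        have : (β i : ℂ) ≠ 0 := by exact_mod_cast (hβ0 i).ne'
        rw [← Complex.cpow_add _ _ this]; norm_num
      have hp : ((∏ i, β i : ℝ) : ℂ) = (∏ i, ((β i : ℂ)) ^ ((1:ℂ)/2)) * (∏ i, ((β i : ℂ)) ^ ((1:ℂ)/2)) := by
        rw [Complex.ofReal_prod, ← Finset.prod_mul_distrib]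
        exact Finset.prod_congr rfl fun i _ => hs i
      have hq : ((∏ i : Fin n, ((Fin.cons 0 β : Fin (n+1) → ℝ) i.succ - (Fin.cons 0 β : Fin (n+1) → ℝ) 0) ^ (1 - ((1:ℕ):ℝ)/2) : ℝ) : ℂ) = ∏ i, ((β i : ℂ)) ^ ((1:ℂ)/2) := by
        rw [Complex.ofReal_prod]
        refine Finset.prod_congr rfl fun i _ => ?_
        rw [Fin.cons_succ, Fin.cons_zero, sub_zero, Complex.ofReal_cpow (hβ0 i).le]
        congr 1; push_cast; norm_num
      have hne : (∏ i, ((β i : ℂ)) ^ ((1:ℂ)/2)) ≠ 0 := Finset.prod_ne_zero_iff.2 fun i _ => by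
        have : (β i : ℂ) ≠ 0 := by exact_mod_cast (hβ0 i).ne'
        simp [Complex.cpow_eq_zero_iff, this]
      rw [hc, Complex.ofReal_div, hq, Complex.ofReal_mul, hp]
      have h1 : ((-1:ℂ))^n * (-1)^n = 1 := by rw [← mul_pow]; simp
      generalize (∏ i, ((β i : ℂ)) ^ ((1:ℂ)/2)) = P at *
      push_cast
      generalize ∏ b, (tau n e b + 1/2)⁻¹ = R
      field_simp
      rw [mul_comm, ← mul_assoc] 
      linear_combination (Kd n 1 : ℂ) * CE n e * R * PD (tau n e) β * h1
    · intro b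
      have : tau n e b + ((1:ℕ):ℂ)/2 ≠ 0 := fun h => by
        have h1 := congrArg Complex.re h
        have := tau_re (fun j hj => (he j hj).le) b
        norm_num at *; linarith
      simp only [Fin.cons_zero, Complex.ofReal_zero]
      exact Complex.zero_cpow this
  · intro Y hY c hc hc0 hd
    refine h _ rfl e (fun j hj => he j (by omega)) ν hν hν1 Y hY c hc hc0 fun t ht => ?_
    have h2 := hd t ht
    rw [hdet t ht, Fin.prod_univ_succ] at h2
    simp only [Fin.cons_zero, Fin.cons_succ, add_zero] at h2
    have hne : t^2 * ∏ i, (t^2 + β i) ≠ 0 := mul_ne_zero (by positivity) (Finset.prod_pos fun i _ => by have := hβ0 i; positivity).ne'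
    refine mul_right_cancel₀ hne ?_
    rw [h2]; ring
  · intro t ht
    rw [hdet t ht, Fin.prod_univ_succ]
    simp only [kap, Fin.cons_zero, Fin.cons_succ, if_true, Fin.succ_ne_zero, if_false, add_zero, Finset.prod_pow]
    ring

lemma det_of_char {m n : ℕ} (hm : m = 2 * n) (X : Matrix (Fin m) (Fin m) ℝ) (hX : Xᵀ = -X) (β : Fin n → ℝ)
    (hdet : ∀ t : ℝ, 0 < t → (t • (1 : Matrix (Fin m) (Fin m) ℝ) - X).det = ∏ i, (t^2 + β i)) : X.det = ∏ i, β i := by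
  have h1 : Filter.Tendsto (fun t : ℝ => (t • (1 : Matrix (Fin m) (Fin m) ℝ) - X).det) (nhdsWithin 0 (Set.Ioi 0)) (nhds ((0:ℝ) • (1 : Matrix (Fin m) (Fin m) ℝ) - X).det) := by
    have : Continuous (fun t : ℝ => (t • (1 : Matrix (Fin m) (Fin m) ℝ) - X).det) := by fun_prop
    exact (this.tendsto 0).mono_left nhdsWithin_le_nhds
  have h2 : Filter.Tendsto (fun t : ℝ => ∏ i, (t^2 + β i)) (nhdsWithin 0 (Set.Ioi 0)) (nhds (∏ i, ((0:ℝ)^2 + β i))) := by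
    have : Continuous (fun t : ℝ => ∏ i, (t^2 + β i)) := by fun_prop
    exact (this.tendsto 0).mono_left nhdsWithin_le_nhds
  have h0 : (fun t : ℝ => (t • (1 : Matrix (Fin m) (Fin m) ℝ) - X).det) =ᶠ[nhdsWithin (0:ℝ) (Set.Ioi 0)] (fun t : ℝ => ∏ i, (t^2 + β i)) :=
    eventually_nhdsWithin_of_forall fun t ht => hdet t ht
  have h3 := tendsto_nhds_unique (h1.congr' h0) h2
  rw [zero_smul, zero_sub, ← hX, det_transpose] at h3
  simpa using h3

lemma ig_top {n : ℕ} (e : ℕ → ℂ) (A : Matrix (Fin (2*(n+1))) (Fin (2*(n+1))) ℝ) :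
    ig (2*(n+1)) (n+1) le_rfl e A = ig (2*(n+1)) n (by omega) e A * cpw A.det (e n) := by
  unfold ig
  rw [Fin.prod_univ_castSucc]
  rfl

lemma FI_top {n : ℕ} (e : ℕ → ℂ) (μ : Measure (OG (2*(n+1)))) (X : Matrix (Fin (2*(n+1))) (Fin (2*(n+1))) ℝ) :
    FI (2*(n+1)) (n+1) le_rfl e μ X = cpw X.det (e n) * FI (2*(n+1)) n (by omega) e μ X := by
  unfold FI
  rw [← integral_const_mul]
  refine integral_congr_ae (Filter.Eventually.of_forall fun k => ?_)
  have : ((k : Matrix (Fin (2*(n+1))) (Fin (2*(n+1))) ℝ) * X * (k : Matrix (Fin (2*(n+1))) (Fin (2*(n+1))) ℝ)ᵀ).det = X.det := by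
    have h := congrArg det (OG_mul_t k)
    rw [det_mul, det_one] at h
    rw [det_mul, det_mul, mul_right_comm, h, one_mul]
  simp only [ig_top, this, mul_comm]

lemma cpw_pos {t : ℝ} (ht : 0 < t) (w : ℂ) : cpw t w = (t : ℂ) ^ w := by
  rw [cpw, if_neg ht.ne', Complex.cpow_def_of_ne_zero (by exact_mod_cast ht.ne'), ← Complex.ofReal_log ht.le, mul_comm]

lemma cpow_prod {N : ℕ} (β : Fin N → ℝ) (h : ∀ i, 0 < β i) (w : ℂ) : ((∏ i, β i : ℝ) : ℂ) ^ w = ∏ i, (β i : ℂ) ^ w := by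
  induction N with
  | zero => simp
  | succ N ih =>
    rw [Fin.prod_univ_succ, Fin.prod_univ_succ, Complex.ofReal_mul, Complex.mul_cpow_ofReal_nonneg (h 0).le (Finset.prod_pos fun i _ => h _).le, ih (fun i => β i.succ) (fun i => h _)]

lemma PO_PE (n : ℕ) (h : PO n) : PE (n+1) := by
  rintro m rfl e he μ hμ hμ1 X hX β hβ hβ0 hdet
  obtain ⟨ν, hν, hν1⟩ := exists_haar (2*n+1)
  have he' : ∀ j < n, 0 < (e j).re := fun j hj => he j (by omega)
  rw [FI_top, det_of_char rfl X hX β hdet, cpw_pos (Finset.prod_pos fun i _ => hβ0 i), cpow_prod β hβ0]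
  have hrec := FI_rec (m := 2*n+1) (by omega) he' μ ν X
  rw [show FI (2*(n+1)) n (by omega) e μ X = _ from hrec]
  rw [stepA (m := 2*n+1) (Or.inr rfl) μ X hX hβ (hβ0 0).le (fun h => absurd h (by norm_num)) ?_ (FI (2*n+1) n (by omega) e ν) ((Kd n 1 : ℂ) * CE n e * ∏ b, (tau n e b + 1/2)⁻¹) (tau n e)
    (tau_re fun j hj => (he' j hj).le)]
  · have hP : PD (tau (n+1) e) β = (∏ i, (β i : ℂ) ^ e n) * (bord fun b j => (β j : ℂ) ^ (tau n e b + ((2:ℕ):ℂ)/2)).det := by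
      rw [PD, ← Matrix.det_mul_row]
      congr 1
      ext b i
      have hb : (β i : ℂ) ≠ 0 := by exact_mod_cast (hβ0 i).ne'
      induction b using Fin.lastCases with
      | last => simp [bord, tau_last]
      | cast b =>
        simp only [bord, of_apply, Fin.lastCases_castSucc, tau_castSucc]
        rw [← Complex.cpow_add _ _ hb]; congr 1; push_cast; ring
    rw [hP, CE]
    have h1 : ∏ i : Fin n, (β i.succ - β 0) ^ (1 - ((2:ℕ):ℝ)/2) = 1 := Finset.prod_eq_one fun i _ => by norm_num
    rw [h1]
    push_cast
    rw [show (2:ℂ)/2 = 1 by norm_num]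
    ring
  · intro Y hY c hc hc0 hd
    refine h _ rfl e he' ν hν hν1 Y hY c hc hc0 fun t ht => ?_
    have h2 := hd t ht
    rw [hdet t ht] at h2
    have hne : ∏ i, (t^2 + β i) ≠ 0 := (Finset.prod_pos fun i _ => by have := hβ0 i; positivity).ne'
    refine mul_right_cancel₀ hne ?_
    rw [h2]; ring
  · intro t ht
    rw [hdet t ht, ← Finset.prod_pow]
    exact Finset.prod_congr rfl fun i _ => by simp [kap]

lemma PE_all (n : ℕ) : PE n := by
  induction n with
  | zero =>
    rintro m rfl e he μ hμ hμ1 X hX β hβ hβ0 hdet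
    simp [FI, ig, CE, PD, VD]
  | succ n ih => exact PO_PE n (PE_PO n ih)

end

section
open scoped ENNReal


lemma vdm_eq {m : ℕ} {R : Type*} [CommRing R] (x : Fin m → R) : vdm x = ∏ i, ∏ j ∈ Finset.Ioi i, (x j - x i) := by
  unfold vdm
  rw [Finset.prod_finset_product _ Finset.univ (fun i => Finset.Ioi i)]
  intro p; simp

lemma VD_vdm {m : ℕ} (x : Fin m → ℝ) : VD x = vdm x := by
  rw [VD, det_vandermonde, vdm_eq]

lemma Dmat_ap {n : ℕ} (a : Fin n → ℝ) (i j : Fin (2*n)) (c : Fin n) (hc : i.val / 2 = c.val) : Dmat a i j =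
    if i.val / 2 = j.val / 2 then
      a c *
        (if i.val % 2 = 0 ∧ j.val % 2 = 1 then 1
          else if i.val % 2 = 1 ∧ j.val % 2 = 0 then -1 else 0)
    else 0 := by
  have : c = ⟨i.val / 2, by have := i.isLt; omega⟩ := Fin.ext hc.symm
  rw [this]; rfl

lemma Dmat_anti {n : ℕ} (a : Fin n → ℝ) : (Dmat a)ᵀ = - Dmat a := by
  ext i j
  rw [transpose_apply, Matrix.neg_apply]
  by_cases h : i.val / 2 = j.val / 2
  · rw [Dmat_ap a j i ⟨i.val / 2, by have := i.isLt; omega⟩ h.symm, Dmat_ap a i j ⟨i.val / 2, by have := i.isLt; omega⟩ rfl, if_pos h, if_pos h.symm]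
    rcases Nat.mod_two_eq_zero_or_one i.val with h1 | h1 <;> rcases Nat.mod_two_eq_zero_or_one j.val with h2 | h2 <;> simp [h1, h2]
  · rw [Dmat_ap a j i ⟨j.val / 2, by have := j.isLt; omega⟩ rfl, Dmat_ap a i j ⟨i.val / 2, by have := i.isLt; omega⟩ rfl, if_neg h, if_neg (fun h' => h h'.symm)]; simp

def eqv (n : ℕ) : Fin 2 × Fin n ≃ Fin (2 * n) where
  toFun p := ⟨2 * p.2.val + p.1.val, by have := p.1.2; have := p.2.2; omega⟩
  invFun i := (⟨i.val % 2, by omega⟩, ⟨i.val / 2, by have := i.2; omega⟩)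
  left_inv p := by
    have := p.1.2
    ext <;> simp <;> omega
  right_inv i := by
    ext; simp; omega

lemma Dmat_char {n : ℕ} (a : Fin n → ℝ) (t : ℝ) :
    (t • (1 : Matrix (Fin (2*n)) (Fin (2*n)) ℝ) - Dmat a).det = ∏ i, (t^2 + a i ^2) := by
  rw [← Matrix.det_submatrix_equiv_self (eqv n)]
  have : (t • (1 : Matrix (Fin (2*n)) (Fin (2*n)) ℝ) - Dmat a).submatrix (eqv n) (eqv n) =
      blockDiagonal (fun i : Fin n => !![t, -a i; a i, t]) := by
    ext p q
    obtain ⟨p1, p2⟩ := p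
    obtain ⟨q1, q2⟩ := q
    have hd : ∀ (x : Fin 2) (y : Fin n), (2 * y.val + x.val) / 2 = y.val := fun x y => by have := x.2; omega
    have hm : ∀ (x : Fin 2) (y : Fin n), (2 * y.val + x.val) % 2 = x.val := fun x y => by have := x.2; omega
    have hv : ∀ (x : Fin 2) (y : Fin n), (eqv n (x, y)).val = 2 * y.val + x.val := fun x y => rfl
    rw [submatrix_apply, Matrix.sub_apply, Matrix.smul_apply, one_apply, Dmat_ap a _ _ p2 (by rw [hv, hd]), blockDiagonal_apply]
    simp only [(eqv n).injective.eq_iff, hv, hd, hm, Prod.mk.injEq, ← Fin.ext_iff]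
    by_cases h : p2 = q2
    · subst h
      fin_cases p1 <;> fin_cases q1 <;> simp
    · simp [h]
  rw [this, det_blockDiagonal]
  exact Finset.prod_congr rfl fun i _ => by rw [det_fin_two_of]; ring

lemma FI_D {n : ℕ} (e : ℕ → ℂ) (he : ∀ j, j + 1 < n → 0 < (e j).re) (μ : Measure (OG (2*n))) (hμ : μ.IsMulLeftInvariant)
    (hμ1 : IsProbabilityMeasure μ) (a : Fin n → ℝ) (ha : ∀ j, 0 < a j) (ha' : Function.Injective a) :
    FI (2*n) n le_rfl e μ (Dmat a) = CE n e * PD (tau n e) (fun i => a i ^ 2) / VD (fun i => a i ^2) := by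
  set σ := Tuple.sort a
  have hmono : StrictMono (a ∘ σ) := (Tuple.monotone_sort a).strictMono_of_injective (ha'.comp σ.injective)
  have h := PE_all n _ rfl e he μ hμ hμ1 (Dmat a) (Dmat_anti a) (fun i => a (σ i) ^ 2)
    (fun i j hij => by have := hmono hij; simp only [Function.comp] at this; have := ha (σ i); show a (σ i) ^ 2 < a (σ j) ^ 2; gcongr)
    (fun i => by have := ha (σ i); positivity)
    (fun t _ => by rw [Dmat_char]; exact (Equiv.prod_comp σ (fun i => t^2 + a i ^2)).symm)
  rw [h]
  have h1 : PD (tau n e) (fun i => a (σ i) ^ 2) = (Equiv.Perm.sign σ : ℂ) * PD (tau n e) (fun i => a i ^ 2) := by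
    unfold PD
    rw [← det_permute']; rfl
  have h2 : VD (fun i => a (σ i) ^ 2) = (Equiv.Perm.sign σ : ℝ) * VD (fun i => a i ^ 2) := by
    unfold VD
    rw [← det_permute]; rfl
  rw [h1, h2]
  rcases Int.units_eq_one_or (Equiv.Perm.sign σ) with h | h <;> rw [h] <;> simp

lemma slope_lim (x y : ℂ) : Filter.Tendsto (fun h : ℝ => (Complex.exp (x * h) - Complex.exp (y * h)) / h)
   (nhdsWithin 0 {0}ᶜ) (nhds (x - y)) := by
  have hx : ∀ x : ℂ, HasDerivAt (fun h : ℝ => Complex.exp (x * h)) x 0 := by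
    intro x
    have h0 : HasDerivAt (fun h : ℝ => x * (h:ℂ)) x 0 := by
      simpa using (Complex.ofRealCLM.hasDerivAt (x := 0)).const_mul x
    simpa using h0.cexp
  have := ((hx x).sub (hx y)).tendsto_slope_zero
  refine this.congr fun h => ?_
  simp [div_eq_inv_mul]

lemma D_lim {n : ℕ} (τ : Fin n → ℂ) :
    Filter.Tendsto (fun h : ℝ => PD τ (fun i => (Real.exp (i.val * h)) ^ 2) / ((VD (fun i : Fin n => (Real.exp (i.val * h))^2) : ℝ) : ℂ))
      (nhdsWithin 0 {0}ᶜ) (nhds (∏ i, ∏ j ∈ Finset.Ioi i, (τ j - τ i) / ((j.val : ℂ) - i.val))) := by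
  have hl : Filter.Tendsto (fun h : ℝ => ∏ i : Fin n, ∏ j ∈ Finset.Ioi i, ((Complex.exp ((2 * τ j) * h) - Complex.exp ((2 * τ i) * h)) / h) / ((Complex.exp ((2 * (j.val:ℂ)) * h) - Complex.exp ((2 * (i.val:ℂ)) * h)) / h))
      (nhdsWithin 0 {0}ᶜ) (nhds (∏ i, ∏ j ∈ Finset.Ioi i, (2 * τ j - 2 * τ i) / (2 * (j.val : ℂ) - 2 * i.val))) := by
    refine tendsto_finsetProd _ fun i _ => tendsto_finsetProd _ fun j hj => ?_
    refine (slope_lim _ _).div (slope_lim _ _) ?_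
    have : i < j := Finset.mem_Ioi.1 hj
    have : i.val < j.val := this
    rw [← mul_sub]
    refine mul_ne_zero two_ne_zero (sub_ne_zero.2 ?_)
    exact_mod_cast this.ne'
  have e1 : ∏ i, ∏ j ∈ Finset.Ioi i, (2 * τ j - 2 * τ i) / (2 * (j.val : ℂ) - 2 * i.val) = ∏ i, ∏ j ∈ Finset.Ioi i, (τ j - τ i) / ((j.val : ℂ) - i.val) := by
    refine Finset.prod_congr rfl fun i _ => Finset.prod_congr rfl fun j _ => ?_
    rw [← mul_sub, ← mul_sub, mul_div_mul_left _ _ two_ne_zero]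
  rw [e1] at hl
  refine hl.congr' ?_
  filter_upwards [self_mem_nhdsWithin] with h hh
  have hh' : (h : ℂ) ≠ 0 := by exact_mod_cast hh
  have hP : PD τ (fun i => (Real.exp (i.val * h)) ^ 2) = (vandermonde fun b => Complex.exp ((2 * τ b) * h)).det := by
    unfold PD
    congr 1
    ext b i
    simp only [of_apply, vandermonde_apply]
    rw [← Real.exp_nat_mul, Complex.ofReal_exp, ← Complex.ofReal_exp, Complex.cpow_def_of_ne_zero (by exact_mod_cast (Real.exp_pos _).ne'), ← Complex.ofReal_log (Real.exp_pos _).le, Real.log_exp, ← Complex.exp_nat_mul]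
    congr 1; push_cast; ring
  rw [hP, VD, det_vandermonde, det_vandermonde, Complex.ofReal_prod, ← Finset.prod_div_distrib]
  refine Finset.prod_congr rfl fun i _ => ?_
  rw [Complex.ofReal_prod, ← Finset.prod_div_distrib]
  refine Finset.prod_congr rfl fun j _ => ?_
  rw [div_div_div_cancel_right₀ hh']
  congr 1
  rw [← Real.exp_nat_mul, ← Real.exp_nat_mul]
  push_cast
  congr 2 <;> ring

end

section
open scoped ENNReal


lemma Dmat_cont {n : ℕ} : Continuous (Dmat : (Fin n → ℝ) → Matrix (Fin (2*n)) (Fin (2*n)) ℝ) := by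
  refine continuous_matrix fun i j => ?_
  simp only [Dmat, of_apply]
  split_ifs <;> fun_prop

lemma Dmat_det {n : ℕ} (a : Fin n → ℝ) : (Dmat a).det = ∏ i, a i ^ 2 :=
  det_of_char rfl (Dmat a) (Dmat_anti a) _ fun t _ => Dmat_char a t

lemma FI_cont {m J : ℕ} (hJ : 2 * J ≤ m) {e : ℕ → ℂ} (he : ∀ j < J, 0 < (e j).re) (μ : Measure (OG m)) [IsProbabilityMeasure μ]
    (X : ℝ → Matrix (Fin m) (Fin m) ℝ) (hX : Continuous X) : Continuous (fun h => FI m J hJ e μ (X h)) := by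
  unfold FI
  have hc : Continuous (Function.uncurry fun (h : ℝ) (k : OG m) => ig m J hJ e ((k : Matrix (Fin m) (Fin m) ℝ) * X h * (k : Matrix (Fin m) (Fin m) ℝ)ᵀ)) := by
    refine (continuous_ig hJ he).comp ?_
    have h1 : Continuous (fun p : ℝ × OG m => X p.1) := hX.comp continuous_fst
    have h2 : Continuous (fun p : ℝ × OG m => (p.2 : Matrix (Fin m) (Fin m) ℝ)) := continuous_subtype_val.comp continuous_snd
    exact (h2.matrix_mul h1).matrix_mul h2.matrix_transpose
  have := continuous_parametric_integral_of_continuous (μ := μ) hc isCompact_univ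
  simpa using this

lemma FI_one {N : ℕ} (e : ℕ → ℂ) (he : ∀ j < N, 0 < (e j).re) (μ : Measure (OG (2*(N+1)))) (hμ : μ.IsMulLeftInvariant)
    (hμ1 : IsProbabilityMeasure μ) :
    FI (2*(N+1)) (N+1) le_rfl e μ (Dmat fun _ => 1) = CE (N+1) e * ∏ i, ∏ j ∈ Finset.Ioi i, (tau (N+1) e j - tau (N+1) e i) / ((j.val : ℂ) - i.val) := by
  set X : ℝ → Matrix (Fin (2*(N+1))) (Fin (2*(N+1))) ℝ := fun h => Dmat (fun i => Real.exp (i.val * h)) with hXd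
  have hX : Continuous X := Dmat_cont.comp (by fun_prop)
  have h1 : Continuous (fun h => FI (2*(N+1)) (N+1) le_rfl e μ (X h)) := by
    simp only [FI_top]
    refine Continuous.mul ?_ (FI_cont _ he μ X hX)
    have hp : ∀ h, 0 < (X h).det := fun h => by
      rw [hXd, Dmat_det]; exact Finset.prod_pos fun i _ => by positivity
    have : (fun h => cpw (X h).det (e N)) = fun h => Complex.exp (e N * ((Real.log (X h).det : ℝ) : ℂ)) := by
      ext h; rw [cpw, if_neg (hp h).ne']
    rw [this]
    have hl : Continuous (fun h => Real.log (X h).det) := (Continuous.matrix_det hX).log fun h => (hp h).ne'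
    fun_prop
  have h2 : X 0 = Dmat fun _ => 1 := by simp [hXd]
  have h3 := (h1.tendsto 0).mono_left (nhdsWithin_le_nhds (s := {0}ᶜ))
  rw [h2] at h3
  refine tendsto_nhds_unique h3 (((D_lim (tau (N+1) e)).const_mul (CE (N+1) e)).congr' ?_)
  filter_upwards [self_mem_nhdsWithin] with h hh
  rw [hXd, FI_D e (fun j hj => he j (by omega)) μ hμ hμ1 _ (fun j => Real.exp_pos _) ?_, mul_div_assoc]
  intro i j hij
  have := mul_right_cancel₀ hh (Real.exp_injective hij)
  exact Fin.ext (by exact_mod_cast this)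

lemma cpw_bound {t M : ℝ} (hM : 1 ≤ M) (ht : |t| ≤ M) {w : ℂ} (hw : 0 ≤ w.re) {ε : ℝ} (h0 : 0 < ε) (h1 : ε < 1) :
    ‖cpw t (w + ε)‖ ≤ Real.exp ((w.re + 1) * Real.log M) := by
  unfold cpw
  split_ifs with h
  · simp [(Real.exp_pos _).le]
  · rw [Complex.norm_exp]
    apply Real.exp_le_exp.2
    rw [Complex.re_mul_ofReal, Complex.add_re, Complex.ofReal_re, ← Real.log_abs]
    have hl : Real.log |t| ≤ Real.log M := Real.log_le_log (abs_pos.2 h) ht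
    have hM0 := Real.log_nonneg hM
    calc (w.re + ε) * Real.log |t| ≤ (w.re + ε) * Real.log M := by gcongr
      _ ≤ _ := by gcongr

lemma cpw_eps (t : ℝ) (w : ℂ) : Filter.Tendsto (fun ε : ℝ => cpw t (w + ε)) (nhdsWithin 0 (Set.Ioi 0)) (nhds (cpw t w)) := by
  unfold cpw
  split_ifs with h
  · exact tendsto_const_nhds
  · have : Continuous (fun ε : ℝ => Complex.exp ((w + ε) * Real.log t)) := by fun_prop
    simpa using (this.tendsto 0).mono_left (nhdsWithin_le_nhds (s := Set.Ioi 0))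

def esh (N : ℕ) (e : ℕ → ℂ) (ε : ℝ) (j : ℕ) : ℂ := e j + if j < N then (ε:ℂ) else 0

lemma FI_eps {m J : ℕ} (hJ : 2 * J ≤ m) {e : ℕ → ℂ} (he : ∀ j < J, 0 ≤ (e j).re) (μ : Measure (OG m)) [IsProbabilityMeasure μ]
    (X : Matrix (Fin m) (Fin m) ℝ) : Filter.Tendsto (fun ε : ℝ => FI m J hJ (esh J e ε) μ X) (nhdsWithin 0 (Set.Ioi 0)) (nhds (FI m J hJ e μ X)) := by
  unfold FI
  set dm : Fin J → OG m → ℝ := fun j k => (((k : Matrix (Fin m) (Fin m) ℝ) * X * (k : Matrix (Fin m) (Fin m) ℝ)ᵀ).submatrix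
          (Fin.castLE (by have := j.isLt; omega : 2 * (j.val + 1) ≤ m))
          (Fin.castLE (by have := j.isLt; omega : 2 * (j.val + 1) ≤ m))).det with hdm
  have hdc : ∀ j, Continuous (dm j) := fun j => by simp only [hdm]; fun_prop
  have hb : ∀ j, ∃ M : ℝ, 1 ≤ M ∧ ∀ k, |dm j k| ≤ M := by
    intro j
    obtain ⟨M, hM⟩ := (isCompact_univ (X := OG m)).exists_bound_of_continuousOn (hdc j).continuousOn
    exact ⟨max 1 M, le_max_left _ _, fun k => (hM k (Set.mem_univ k)).trans (le_max_right _ _)⟩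
  choose M hM1 hM using hb
  refine tendsto_integral_filter_of_dominated_convergence (fun _ => ∏ j : Fin J, Real.exp (((e j).re + 1) * Real.log (M j))) ?_ ?_ (integrable_const _) ?_
  · filter_upwards [self_mem_nhdsWithin] with ε hε
    have hε' : 0 < ε := hε
    refine Continuous.aestronglyMeasurable ((continuous_ig hJ fun j hj => ?_).comp ?_)
    · simp only [esh, if_pos hj, Complex.add_re, Complex.ofReal_re]
      have := he j hj; linarith
    · fun_prop
  · filter_upwards [Ioo_mem_nhdsGT (show (0:ℝ) < 1 by norm_num)] with ε hε
    refine Filter.Eventually.of_forall fun k => ?_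
    unfold ig
    rw [norm_prod]
    refine Finset.prod_le_prod (fun _ _ => norm_nonneg _) fun j _ => ?_
    simp only [esh, if_pos j.2]
    exact cpw_bound (hM1 j) (hM j k) (he j j.2) hε.1 hε.2
  · refine Filter.Eventually.of_forall fun k => ?_
    unfold ig
    refine tendsto_finsetProd _ fun j _ => ?_
    simp only [esh, if_pos j.2]
    exact cpw_eps _ _

lemma FI_eps' {N : ℕ} {e : ℕ → ℂ} (he : ∀ j < N, 0 ≤ (e j).re) (μ : Measure (OG (2*(N+1)))) [IsProbabilityMeasure μ]
    (X : Matrix (Fin (2*(N+1))) (Fin (2*(N+1))) ℝ) : Filter.Tendsto (fun ε : ℝ => FI (2*(N+1)) (N+1) le_rfl (esh N e ε) μ X) (nhdsWithin 0 (Set.Ioi 0)) (nhds (FI (2*(N+1)) (N+1) le_rfl e μ X)) := by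
  simp only [FI_top]
  have : ∀ ε, esh N e ε N = e N := fun ε => by simp [esh]
  simp only [this]
  exact (FI_eps _ he μ X).const_mul _

lemma esh_lim (N : ℕ) (e : ℕ → ℂ) (j : ℕ) : Filter.Tendsto (fun ε : ℝ => esh N e ε j) (nhdsWithin 0 (Set.Ioi 0)) (nhds (e j)) := by
  have : Continuous (fun ε : ℝ => esh N e ε j) := by
    unfold esh; split_ifs <;> fun_prop
  simpa [esh] using (this.tendsto 0).mono_left (nhdsWithin_le_nhds (s := Set.Ioi 0))

lemma tau_lim {l : Filter ℝ} {es : ℝ → ℕ → ℂ} {e : ℕ → ℂ} (h : ∀ j, Filter.Tendsto (fun ε => es ε j) l (nhds (e j))) (n : ℕ) (b : Fin n) :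
    Filter.Tendsto (fun ε => tau n (es ε) b) l (nhds (tau n e b)) := by
  unfold tau
  exact (tendsto_finsetSum _ fun j _ => (h j).add_const 1).sub_const 1

lemma CE_lim {l : Filter ℝ} {es : ℝ → ℕ → ℂ} {e : ℕ → ℂ} (h : ∀ j, Filter.Tendsto (fun ε => es ε j) l (nhds (e j))) (n : ℕ)
    (he : ∀ j, j + 1 < n → 0 ≤ (e j).re) :
    Filter.Tendsto (fun ε => CE n (es ε)) l (nhds (CE n e)) := by
  induction n with
  | zero => simp only [CE]; exact tendsto_const_nhds
  | succ n ih =>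
    have hr := tau_re (n := n) (e := e) (fun j hj => he j (by omega))
    have h3 : ∀ b, tau n e b + 1/2 ≠ 0 := fun b h => by
      have := congrArg Complex.re h
      have := hr b
      norm_num at *; linarith
    have h4 : ∀ b, tau n e b + 1 ≠ 0 := fun b h => by
      have := congrArg Complex.re h
      have := hr b
      norm_num at *; linarith
    simp only [CE]
    refine Filter.Tendsto.mul (Filter.Tendsto.const_mul _ (Filter.Tendsto.mul (Filter.Tendsto.const_mul _ (ih fun j hj => he j (by omega))) ?_)) (Filter.Tendsto.mul_const _ ?_)
    · exact tendsto_finsetProd _ fun b _ => ((tau_lim h n b).add_const _).inv₀ (h3 b)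
    · exact tendsto_finsetProd _ fun b _ => ((tau_lim h n b).add_const _).inv₀ (h4 b)

lemma PD_lim {l : Filter ℝ} {n : ℕ} {ts : ℝ → Fin n → ℂ} {t : Fin n → ℂ} (h : ∀ b, Filter.Tendsto (fun ε => ts ε b) l (nhds (t b)))
    (x : Fin n → ℝ) (hx : ∀ i, 0 < x i) : Filter.Tendsto (fun ε => PD (ts ε) x) l (nhds (PD t x)) := by
  unfold PD
  simp only [det_apply, of_apply]
  refine tendsto_finsetSum _ fun σ _ => Filter.Tendsto.const_smul ?_ _
  refine tendsto_finsetProd _ fun i _ => ?_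
  have : (x i : ℂ) ≠ 0 := by exact_mod_cast (hx i).ne'
  exact (h _).const_cpow (Or.inl this)

lemma esh_pos {N : ℕ} {e : ℕ → ℂ} (he : ∀ j < N, 0 ≤ (e j).re) {ε : ℝ} (hε : 0 < ε) : ∀ j < N, 0 < (esh N e ε j).re := by
  intro j hj
  simp only [esh, if_pos hj, Complex.add_re, Complex.ofReal_re]
  have := he j hj; linarith

lemma FI_D' {N : ℕ} (e : ℕ → ℂ) (he : ∀ j < N, 0 ≤ (e j).re) (μ : Measure (OG (2*(N+1)))) (hμ : μ.IsMulLeftInvariant)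
    (hμ1 : IsProbabilityMeasure μ) (a : Fin (N+1) → ℝ) (ha : ∀ j, 0 < a j) (ha' : Function.Injective a) :
    FI (2*(N+1)) (N+1) le_rfl e μ (Dmat a) = CE (N+1) e * PD (tau (N+1) e) (fun i => a i ^ 2) / VD (fun i => a i ^2) := by
  refine tendsto_nhds_unique (FI_eps' he μ _) (Filter.Tendsto.congr' ?_ (((CE_lim (esh_lim N e) (N+1) fun j hj => he j (by omega)).mul
    (PD_lim (tau_lim (esh_lim N e) (N+1)) (fun i => a i ^ 2) fun i => by have := ha i; positivity)).div_const _))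
  filter_upwards [self_mem_nhdsWithin] with ε hε
  rw [FI_D _ (fun j hj => esh_pos he hε j (by omega)) μ hμ hμ1 a ha ha']

lemma FI_one' {N : ℕ} (e : ℕ → ℂ) (he : ∀ j < N, 0 ≤ (e j).re) (μ : Measure (OG (2*(N+1)))) (hμ : μ.IsMulLeftInvariant)
    (hμ1 : IsProbabilityMeasure μ) :
    FI (2*(N+1)) (N+1) le_rfl e μ (Dmat fun _ => 1) = CE (N+1) e * ∏ i, ∏ j ∈ Finset.Ioi i, (tau (N+1) e j - tau (N+1) e i) / ((j.val : ℂ) - i.val) := by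
  refine tendsto_nhds_unique (FI_eps' he μ _) (Filter.Tendsto.congr' ?_ ((CE_lim (esh_lim N e) (N+1) fun j hj => he j (by omega)).mul
    (tendsto_finsetProd _ fun i _ => tendsto_finsetProd _ fun j _ => ((tau_lim (esh_lim N e) (N+1) j).sub (tau_lim (esh_lim N e) (N+1) i)).div_const ((j.val : ℂ) - i.val))))
  filter_upwards [self_mem_nhdsWithin] with ε hε
  rw [FI_one _ (fun j hj => esh_pos he hε j hj) μ hμ hμ1]

end



def eS (n : ℕ) (s : Fin n → ℂ) (j : ℕ) : ℂ := if h : j < n then expo n s ⟨j, h⟩ else 0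

lemma sph_FI (n : ℕ) (μ : Measure (OG (2*n))) (s : Fin n → ℂ) (X : Matrix (Fin (2 * n)) (Fin (2 * n)) ℝ) :
    sphInt n μ s X = FI (2*n) n le_rfl (eS n s) μ X := by
  unfold sphInt FI ig
  refine integral_congr_ae (Filter.Eventually.of_forall fun k => Finset.prod_congr rfl fun j _ => ?_)
  simp only [eS, j.2, dif_pos]

lemma tau_eS (n : ℕ) (s : Fin n → ℂ) (b : Fin n) : tau n (eS n s) b = (s b + n - 1) / 2 := by
  unfold tau
  have : ∀ j ∈ Finset.Ico (b:ℕ) n, eS n s j + 1 = (fun i : ℕ => -(if h : i < n then s ⟨i, h⟩ else -(n:ℂ) - 1) / 2) (j+1) - (fun i : ℕ => -(if h : i < n then s ⟨i, h⟩ else -(n:ℂ) - 1) / 2) j := by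
    intro j hj
    have hj' := (Finset.mem_Ico.1 hj).2
    simp only [eS, hj', dif_pos, expo]
    ring
  rw [Finset.sum_congr rfl this, Finset.sum_Ico_sub (fun i : ℕ => -(if h : i < n then s ⟨i, h⟩ else -(n:ℂ) - 1) / 2) b.2.le]
  simp only [lt_irrefl, dif_neg, not_false_eq_true, b.2, dif_pos, Fin.eta]
  ring

lemma fact_prod (n : ℕ) : ∏ i : Fin n, ∏ j ∈ Finset.Ioi i, (2 * ((j.val : ℂ) - i.val)) = ((∏ j ∈ Finset.range n, 2 ^ j * Nat.factorial j : ℕ) : ℂ) := by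
  induction n with
  | zero => simp
  | succ n ih =>
    have h1 : ∀ i : Fin n, ∏ j ∈ Finset.Ioi i.castSucc, (2 * ((j.val : ℂ) - i.castSucc.val)) = (∏ j ∈ Finset.Ioi i, (2 * ((j.val : ℂ) - i.val))) * (2 * ((n:ℂ) - i.val)) := by
      intro i
      have : Finset.Ioi i.castSucc = Finset.cons (Fin.last n) ((Finset.Ioi i).map Fin.castSuccEmb) (by simp) := by
        ext j
        induction j using Fin.lastCases with
        | last => simp [Fin.castSucc_lt_last]
        | cast j => simp [Fin.le_last]
      rw [this, Finset.prod_cons, Finset.prod_map, mul_comm]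
      simp
    have h2 : Finset.Ioi (Fin.last n) = ∅ := by ext j; simp [Fin.le_last]
    rw [Fin.prod_univ_castSucc, h2, Finset.prod_empty, mul_one, Finset.prod_congr rfl fun i _ => h1 i, Finset.prod_mul_distrib, ih, Finset.prod_range_succ]
    push_cast
    congr 1
    rw [Finset.prod_mul_distrib, Finset.prod_const, Finset.card_univ, Fintype.card_fin]
    congr 1
    rw [Fin.prod_univ_eq_prod_range (fun i => (n:ℂ) - i) n, ← Finset.prod_range_reflect, ← Finset.prod_range_add_one_eq_factorial]
    push_cast
    refine Finset.prod_congr rfl fun j hj => ?_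
    have := Finset.mem_range.1 hj
    rw [Nat.sub_sub, Nat.cast_sub (by omega)]
    push_cast; ring

/-- Theorem 2.4 of the paper: explicit evaluation of the spherical
function `Φ(s; D(a)) = f_n(s,D(a))/f_n(s,D(1))`. -/
theorem spherical_function_explicit (n : ℕ) (hn : 1 ≤ n)
    (μ : Measure (OG (2 * n))) (hμ : μ.IsHaarMeasure) (hμ1 : IsProbabilityMeasure μ)
    (a : Fin n → ℝ) (ha : ∀ j, 0 < a j) (ha' : Function.Injective a)
    (s : Fin n → ℂ) (hs : Function.Injective s)
    (hre : ∀ j : Fin n, ∀ h : j.val + 1 < n, 2 ≤ (s j - s ⟨j.val + 1, h⟩).re) :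
    sphInt n μ s (Dmat (fun _ => 1)) ≠ 0 ∧
      sphInt n μ s (Dmat a) / sphInt n μ s (Dmat (fun _ => 1)) =
        ((∏ j ∈ Finset.range n, 2 ^ j * Nat.factorial j : ℕ) : ℂ) *
          (Matrix.of fun b c : Fin n => cpw (a c) (s b + (n : ℂ) - 1)).det /
            (((vdm fun j => (a j) ^ 2 : ℝ) : ℂ) * vdm s) := by
  obtain ⟨N, rfl⟩ : ∃ N, n = N + 1 := ⟨n - 1, by omega⟩
  have hinv : μ.IsMulLeftInvariant := hμ.toIsMulLeftInvariant
  have he : ∀ j < N, 0 ≤ (eS (N+1) s j).re := by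
    intro j hj
    have h := hre ⟨j, by omega⟩ (by simpa using hj)
    simp only [eS, expo, dif_pos (show j < N+1 by omega), dif_pos (show j + 1 < N + 1 by omega)]
    rw [Complex.sub_re, Complex.one_re, Complex.div_ofNat_re]
    linarith
  have hC : CE (N+1) (eS (N+1) s) ≠ 0 := CE_ne fun j hj => he j (by omega)
  rw [sph_FI, sph_FI, FI_D' _ he μ hinv hμ1 a ha ha', FI_one' _ he μ hinv hμ1]
  have hfne : ((∏ j ∈ Finset.range (N+1), 2 ^ j * Nat.factorial j : ℕ) : ℂ) ≠ 0 := by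
    rw [Nat.cast_ne_zero]
    exact Finset.prod_ne_zero_iff.2 fun j _ => by positivity
  have hsne : vdm s ≠ 0 := by
    rw [vdm_eq]
    exact Finset.prod_ne_zero_iff.2 fun i _ => Finset.prod_ne_zero_iff.2 fun j hj => sub_ne_zero.2 fun h => (Finset.mem_Ioi.1 hj).ne' (hs h)
  have hT : ∏ i, ∏ j ∈ Finset.Ioi i, (tau (N+1) (eS (N+1) s) j - tau (N+1) (eS (N+1) s) i) / ((j.val : ℂ) - i.val) =
      vdm s / ((∏ j ∈ Finset.range (N+1), 2 ^ j * Nat.factorial j : ℕ) : ℂ) := by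
    rw [← fact_prod, vdm_eq, ← Finset.prod_div_distrib]
    refine Finset.prod_congr rfl fun i _ => ?_
    rw [← Finset.prod_div_distrib]
    refine Finset.prod_congr rfl fun j _ => ?_
    rw [tau_eS, tau_eS, ← div_div]
    congr 1; ring
  have hP : PD (tau (N+1) (eS (N+1) s)) (fun i => a i ^ 2) = (Matrix.of fun b c : Fin (N+1) => cpw (a c) (s b + ((N+1 : ℕ) : ℂ) - 1)).det := by
    unfold PD
    congr 1
    ext b c
    simp only [of_apply]
    rw [tau_eS, cpw_pos (ha c), Complex.ofReal_pow, pow_two, Complex.mul_cpow_ofReal_nonneg (ha c).le (ha c).le,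
      ← Complex.cpow_add _ _ (by exact_mod_cast (ha c).ne')]
    congr 1; ring
  rw [hT, hP, VD_vdm]
  refine ⟨mul_ne_zero hC (div_ne_zero hsne hfne), ?_⟩
  generalize ((∏ j ∈ Finset.range (N+1), 2 ^ j * Nat.factorial j : ℕ) : ℂ) = Q at *
  by_cases hv : ((vdm fun j => (a j) ^ 2 : ℝ) : ℂ) = 0
  · simp [hv]
  · field_simp

end
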